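/- arXiv:2110.00515 — 2 statements merged into one kernel-verified Lean document; each statement's English description precedes it below -/
import Mathlib

section
/- Mahler's generalization of Siegel's theorem: let K be a number field, let S be a finite set of maximal ideals of the ring of integers of K, and let O_{K,S} be the ring of S-integers of K. If f is a polynomial with coefficients in K that is squarefree and of degree at least 3, then the set of pairs (x, y) ∈ O_{K,S} × O_{K,S} with y² = f(x) is finite. -/
open IsDedekindDomain NumberField

/-!
Suppose `y ^ 2 = f x` with `x` an `S`-integer. Outside a fixed finite set of places, every `x - α`
with `α` a root of `f` has even valuation, so by finiteness of the class group and finite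
generation of the units it lies in finitely many classes modulo squares, and it becomes a square in
a fixed number field. After enlarging `S`, the sums and differences of the square roots of `x - α`,
`x - β`, `x - γ` for three roots are `S`-units, and Siegel's identity recovers `x` from two
solutions of the unit equation `u + v = 1`.

That the unit equation has finitely many solutions follows from a gap principle. View solutions as
`S`-unit points `x` on the line `x₀ + x₁ + x₂ = 0`, let `x` and `y` be two of them, and put
`n = 2 * N + 1`. Then `t = y / x ^ n` is orthogonal to `x ^ n`. Choose nodes `a₀, a₁, a₂` whose
differences are the `xᵢ`. By the residue theorem the residues of `Q / ∏ (X - aᵢ) ^ (N + 1)`, for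
`deg Q ≤ 1`, give further vectors `w` orthogonal to `x ^ n`, of height at most `(N + 1) h(x) +
O(N)`, and some `Q` yields a `w` that is not proportional to `t`. So `x ^ n` is proportional to the
cross product of `t` and `w`, whence `n h(x) ≤ h(t) + (N + 1) h(x) + O(N)`, that is, `h(t)` is not
small. But among infinitely many solutions there are, by compactness, `x` and `y` of large height
ratio whose logarithmic vectors point in almost the same direction, and then `t` has small height
when `n` is close to that ratio.
-/

namespace MahlerSiegel

section Residues

open Finset Polynomial

variable {ι K : Type*} [Fintype ι] [DecidableEq ι] [Field K] {a : ι → K} {N : ℕ} {Q : K[X]}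

/-- The product of the linear factors at the nodes other than `a i`. -/
noncomputable def cofactor (a : ι → K) (i : ι) : K[X] := ∏ j ∈ univ.erase i, (X - C (a j))

theorem monic_cofactor (a : ι → K) (i : ι) : (cofactor a i).Monic :=
  monic_prod_X_sub_C _ _

theorem natDegree_cofactor (a : ι → K) (i : ι) :
    (cofactor a i).natDegree = Fintype.card ι - 1 := by
  rw [cofactor, natDegree_finsetProd_X_sub_C_eq_card, card_erase_of_mem (mem_univ i), card_univ]

theorem eval_cofactor_ne_zero (ha : a.Injective) (i : ι) : (cofactor a i).eval (a i) ≠ 0 := by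
  simp only [cofactor, eval_prod, eval_sub, eval_X, eval_C, prod_ne_zero_iff, sub_ne_zero]
  exact fun j hj ↦ ha.ne (ne_of_mem_erase hj).symm

/-- The residue at the node `a i` of the rational function `Q / ∏ j, (X - a j) ^ (N + 1)`, read off
from the expansion of `(X - a i) ^ (N + 1)` times that function in the local parameter
`X - a i`. -/
noncomputable def residue (a : ι → K) (N : ℕ) (i : ι) : K[X] →ₗ[K] K :=
  PowerSeries.coeff N ∘ₗ
    LinearMap.mulRight K ((taylor (a i) (cofactor a i) : PowerSeries K)⁻¹ ^ (N + 1)) ∘ₗ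
    (coeToPowerSeries.algHom K).toLinearMap ∘ₗ taylor (a i)

theorem residue_apply (a : ι → K) (N : ℕ) (i : ι) (Q : K[X]) :
    residue a N i Q = PowerSeries.coeff N ((taylor (a i) Q : PowerSeries K) *
      (taylor (a i) (cofactor a i) : PowerSeries K)⁻¹ ^ (N + 1)) := by
  simp [residue]

theorem residue_eq_zero_of_dvd {i : ι} (hQ : (X - C (a i)) ^ (N + 1) ∣ Q) :
    residue a N i Q = 0 := by
  obtain ⟨F, rfl⟩ := hQ
  rw [residue_apply, taylor_mul, taylor_pow, map_sub, taylor_X, taylor_C, add_sub_cancel_right,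
    Polynomial.coe_mul, Polynomial.coe_pow, coe_X, mul_assoc, PowerSeries.coeff_X_pow_mul',
    if_neg (by lia)]

theorem residue_mul_cofactor_pow (ha : a.Injective) (i : ι) (U : K[X]) :
    residue a N i (U * cofactor a i ^ (N + 1)) = (taylor (a i) U).coeff N := by
  have hne : (taylor (a i) (cofactor a i) : PowerSeries K).constantCoeff ≠ 0 := by
    simpa using eval_cofactor_ne_zero ha i
  rw [residue_apply, taylor_mul, taylor_pow, Polynomial.coe_mul, Polynomial.coe_pow, mul_assoc,
    ← mul_pow, PowerSeries.mul_inv_cancel _ hne, one_pow, mul_one, coeff_coe]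

theorem residue_sum_mul_cofactor_pow (ha : a.Injective) {U : ι → K[X]} (i : ι)
    (hU : (U i).natDegree ≤ N) :
    residue a N i (∑ j, U j * cofactor a j ^ (N + 1)) = (U i).coeff N := by
  rw [map_sum, Finset.sum_eq_single_of_mem i (mem_univ i), residue_mul_cofactor_pow ha]
  · obtain rfl | hlt := hU.eq_or_lt
    · exact coeff_taylor_natDegree ..
    · rw [coeff_eq_zero_of_natDegree_lt hlt,
        coeff_eq_zero_of_natDegree_lt (by rwa [natDegree_taylor])]
  · intro j _ hj
    refine residue_eq_zero_of_dvd (dvd_mul_of_dvd_right (pow_dvd_pow_of_dvd ?_ _) _)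
    exact dvd_prod_of_mem _ (mem_erase.2 ⟨hj.symm, mem_univ i⟩)

theorem exists_eq_sum_mul_cofactor_pow (ha : a.Injective)
    (hQ : Q.natDegree < Fintype.card ι * (N + 1)) :
    ∃ U : ι → K[X], (∀ i, (U i).natDegree ≤ N) ∧ Q = ∑ i, U i * cofactor a i ^ (N + 1) := by
  have hmonic : ∀ i ∈ univ, ((X - C (a i)) ^ (N + 1)).Monic := fun i _ ↦ (monic_X_sub_C _).pow _
  obtain ⟨q, U, hU, hQU⟩ := eq_quo_mul_prod_add_sum_rem_mul_prod Q hmonic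
    fun i _ j _ hij ↦ (pairwise_coprime_X_sub_C ha hij).pow
  replace hQU : Q = q * (∏ i, (X - C (a i))) ^ (N + 1) + ∑ i, U i * cofactor a i ^ (N + 1) := by
    simpa only [cofactor, ← prod_pow] using hQU
  have hdegU (i : ι) : (U i).natDegree ≤ N := by
    have := hU i (mem_univ i)
    rw [degree_pow, degree_X_sub_C, nsmul_one, degree_lt_iff_coeff_zero] at this
    exact natDegree_le_iff_coeff_eq_zero.2 this
  have hdegSum : (∑ i, U i * cofactor a i ^ (N + 1)).natDegree < Fintype.card ι * (N + 1) := by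
    refine lt_of_le_of_lt (natDegree_sum_le_of_forall_le _ _ fun i _ ↦ natDegree_mul_le_of_le
      (hdegU i) (natDegree_pow_le_of_le _ (natDegree_cofactor a i).le)) ?_
    cases h : Fintype.card ι with
    | zero => simp [h] at hQ
    | succ c => rw [Nat.add_sub_cancel]; linarith
  have hq : q = 0 := by
    by_contra hq
    have hP : (∏ i, (X - C (a i))).Monic := monic_prod_X_sub_C _ _
    have hdeg : (q * (∏ i, (X - C (a i))) ^ (N + 1)).natDegree < Fintype.card ι * (N + 1) := by
      rw [eq_sub_iff_add_eq.2 hQU.symm]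
      exact (natDegree_sub_le _ _).trans_lt (max_lt hQ hdegSum)
    rw [mul_comm q, (hP.pow _).natDegree_mul' hq, hP.natDegree_pow,
      natDegree_finsetProd_X_sub_C_eq_card, card_univ] at hdeg
    lia
  exact ⟨U, hdegU, by simpa [hq] using hQU⟩

/-- The form `Q / ∏ j, (X - a j) ^ (N + 1) dX` has no residue at infinity. -/
theorem sum_residue_eq_zero (ha : a.Injective)
    (hQ : Q.natDegree + 1 < Fintype.card ι * (N + 1)) : ∑ i, residue a N i Q = 0 := by
  obtain ⟨U, hU, rfl⟩ := exists_eq_sum_mul_cofactor_pow ha (N := N) (Q := Q) (by lia)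
  have hcoeff := coeff_eq_zero_of_natDegree_lt (Nat.lt_sub_of_add_lt hQ)
  rw [finsetSum_coeff] at hcoeff
  rw [← hcoeff]
  refine sum_congr rfl fun i _ ↦ ?_
  have hcard : Fintype.card ι * (N + 1) - 1 = N + (Fintype.card ι - 1) * (N + 1) := by
    obtain ⟨c, hc⟩ := Nat.exists_eq_add_of_lt (Fintype.card_pos_iff.2 ⟨i⟩)
    simp only [hc, zero_add, Nat.add_sub_cancel, add_mul, one_mul]
    lia
  have hlead : (cofactor a i ^ (N + 1)).coeff ((Fintype.card ι - 1) * (N + 1)) = 1 := by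
    rw [mul_comm, ← natDegree_cofactor a i, ← (monic_cofactor a i).natDegree_pow]
    exact ((monic_cofactor a i).pow _).coeff_natDegree
  rw [residue_sum_mul_cofactor_pow ha i (hU i), hcard, coeff_mul_add_eq_of_natDegree_le (hU i)
    (natDegree_pow_le_of_le _ (natDegree_cofactor a i).le |>.trans_eq (mul_comm _ _)), hlead,
    mul_one]

theorem coeff_X_mul_derivative {R : Type*} [CommRing R] (p : R[X]) (n : ℕ) :
    (X * derivative p).coeff n = n * p.coeff n := by
  cases n with
  | zero => simp
  | succ n => rw [coeff_X_mul, coeff_derivative, mul_comm]; push_cast; rfl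

theorem natDegree_X_mul_derivative_le {R : Type*} [CommRing R] (p : R[X]) :
    (X * derivative p).natDegree ≤ p.natDegree :=
  natDegree_le_iff_coeff_eq_zero.2 fun n hn ↦ by
    rw [coeff_X_mul_derivative, coeff_eq_zero_of_natDegree_lt hn, mul_zero]

/-- Up to the factor `P ^ (n + 1)`, the polynomial in the conclusion is the derivative of the
rational function `E / P ^ n`. -/
theorem natDegree_add_le_of_derivative_mul_sub [CharZero K] {E P : K[X]} {n : ℕ} (hE : E ≠ 0)
    (hP : P.Monic) (hne : E.natDegree ≠ n * P.natDegree) :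
    E.natDegree + P.natDegree ≤ (derivative E * P - n * E * derivative P).natDegree + 1 := by
  set Q := derivative E * P - n * E * derivative P with hQ
  have hcoeff : (X * Q).coeff (E.natDegree + P.natDegree) =
      (E.natDegree - n * P.natDegree) * E.leadingCoeff := by
    have h : X * Q = X * derivative E * P - C (n : K) * (E * (X * derivative P)) := by
      rw [hQ, map_natCast]; ring
    rw [h, coeff_sub, coeff_C_mul,
      coeff_mul_add_eq_of_natDegree_le (natDegree_X_mul_derivative_le E) le_rfl,
      coeff_mul_add_eq_of_natDegree_le le_rfl (natDegree_X_mul_derivative_le P),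
      coeff_X_mul_derivative, coeff_X_mul_derivative, hP.coeff_natDegree, coeff_natDegree]
    ring
  have hcoeff_ne : (X * Q).coeff (E.natDegree + P.natDegree) ≠ 0 := by
    rw [hcoeff]
    exact mul_ne_zero (sub_ne_zero.2 (mod_cast hne)) (leadingCoeff_ne_zero.2 hE)
  have hQ0 : Q ≠ 0 := fun h ↦ hcoeff_ne (by simp [h])
  rw [← natDegree_X_mul hQ0]
  exact le_natDegree_of_ne_zero hcoeff_ne

theorem exists_sub_mul_derivative_sub_eq [CharZero K] (c : K) {n : ℕ} {U : K[X]}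
    (hU : U.degree < n) :
    ∃ J : K[X], J.degree < n ∧ (X - C c) * derivative J - (n : K[X]) * J = U := by
  refine ⟨∑ k ∈ range n, C ((taylor c U).coeff k / (k - n)) * (X - C c) ^ k, ?_, ?_⟩
  · rw [← mem_degreeLT]
    refine Submodule.sum_mem _ fun k hk ↦ ?_
    rw [← smul_eq_C_mul]
    exact Submodule.smul_mem _ _ (mem_degreeLT.2 (by simpa using hk))
  · have hU' : U = ∑ k ∈ range n, C ((taylor c U).coeff k) * (X - C c) ^ k := by
      nth_rw 1 [← sum_taylor_eq U c]
      refine sum_eq_of_subset _ (by simp) fun k hk ↦ mem_range.2 ?_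
      exact WithBot.coe_lt_coe.1 ((le_degree_of_mem_supp k hk).trans_lt (by rwa [degree_taylor]))
    nth_rw 3 [hU']
    rw [derivative_sum, mul_sum, mul_sum, ← sum_sub_distrib]
    refine sum_congr rfl fun k hk ↦ ?_
    have hne : (k : K) - n ≠ 0 := sub_ne_zero.2 (mod_cast (mem_range.1 hk).ne)
    have hsub : (X - C c) * derivative ((X - C c) ^ k) = C (k : K) * (X - C c) ^ k := by
      cases k with
      | zero => simp
      | succ k => rw [derivative_X_sub_C_pow, Nat.add_sub_cancel, pow_succ]; ring
    rw [derivative_C_mul, mul_left_comm, hsub, mul_left_comm, ← map_natCast C n, ← sub_mul,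
      ← map_sub, ← mul_assoc, ← map_mul, mul_div_cancel₀ _ hne]

theorem sum_mul_cofactor_pow_eq_derivative_mul_sub (a : ι → K) (N : ℕ) (J : ι → K[X]) :
    ∑ i, ((X - C (a i)) * derivative (J i) - (N : K[X]) * J i) * cofactor a i ^ (N + 1) =
      derivative (∑ i, J i * cofactor a i ^ N) * ∏ i, (X - C (a i)) -
        (N : K[X]) * (∑ i, J i * cofactor a i ^ N) * derivative (∏ i, (X - C (a i))) := by
  rw [derivative_sum, sum_mul, mul_sum, sum_mul, ← sum_sub_distrib]
  refine sum_congr rfl fun i _ ↦ ?_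
  have hP : ∏ j, (X - C (a j)) = (X - C (a i)) * cofactor a i :=
    (mul_prod_erase _ _ (mem_univ i)).symm
  rw [hP]
  cases N with
  | zero =>
    simp only [Nat.cast_zero, zero_mul, sub_zero, zero_add, pow_one, pow_zero, mul_one]
    ring
  | succ N =>
    simp only [derivative_mul, derivative_pow, Nat.cast_add, Nat.cast_one, map_add, map_natCast,
      map_one, Nat.add_sub_cancel, derivative_sub, derivative_X, derivative_C, sub_zero, one_mul]
    ring

/-- If all residues vanish then the rational function `Q / ∏ j, (X - a j) ^ (N + 1)` has a rational
primitive `E / ∏ j, (X - a j) ^ N` with `deg E < N * |ι|`, which is impossible for degree reasons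
unless `Q = 0`. -/
theorem eq_zero_of_residue_eq_zero [CharZero K] (ha : a.Injective)
    (hQ : Q.natDegree + 1 < Fintype.card ι) (hres : ∀ i, residue a N i Q = 0) : Q = 0 := by
  obtain ⟨U, hU, rfl⟩ := exists_eq_sum_mul_cofactor_pow ha (N := N) (Q := Q) (by nlinarith)
  have hdegU (i : ι) : (U i).degree < N := by
    have := hres i
    rw [residue_sum_mul_cofactor_pow ha i (hU i)] at this
    exact (natDegree_le_iff_degree_le.1 (hU i)).lt_of_ne fun h ↦ coeff_ne_zero_of_eq_degree h this
  choose J hJ hJU using fun i ↦ exists_sub_mul_derivative_sub_eq (a i) (hdegU i)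
  set P : K[X] := ∏ i, (X - C (a i)) with hP
  set E : K[X] := ∑ i, J i * cofactor a i ^ N with hE
  have hprim : ∑ i, U i * cofactor a i ^ (N + 1) = derivative E * P - N * E * derivative P := by
    simp only [← hJU, hE, hP, sum_mul_cofactor_pow_eq_derivative_mul_sub a N J]
  rw [hprim] at hQ ⊢
  by_contra hne
  have hPdeg : P.natDegree = Fintype.card ι := by
    rw [hP, natDegree_finsetProd_X_sub_C_eq_card, card_univ]
  have hEne : E ≠ 0 := fun h ↦ hne (by simp [h])
  have hEdeg : E.degree < (N * P.natDegree : ℕ) := by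
    rw [← mem_degreeLT]
    refine Submodule.sum_mem _ fun i _ ↦ mem_degreeLT.2 ?_
    have hcard : N * P.natDegree = N + N * (Fintype.card ι - 1) := by
      have : 1 ≤ Fintype.card ι := Fintype.card_pos_iff.2 ⟨i⟩
      rw [hPdeg, ← mul_one_add, Nat.add_sub_cancel' this]
    rw [degree_mul, degree_pow, degree_eq_natDegree (monic_cofactor a i).ne_zero,
      natDegree_cofactor, hcard, nsmul_eq_mul, Nat.cast_add, ← Nat.cast_mul]
    exact WithBot.add_lt_add_right (WithBot.coe_ne_bot) (hJ i)
  have := natDegree_add_le_of_derivative_mul_sub hEne (monic_prod_X_sub_C _ _ : P.Monic)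
    ((natDegree_lt_iff_degree_lt hEne).2 hEdeg).ne
  lia

end Residues

section NatBound

variable {K : Type*} [Field K] (v : AbsoluteValue K ℝ)

open scoped Classical in
/-- The factor by which a sum of `n` terms can exceed its largest term: `1` for a nonarchimedean
absolute value and `n` otherwise. It allows both kinds to be treated at once. -/
noncomputable def natBound (n : ℕ) : ℝ := if IsNonarchimedean v then 1 else n

theorem natBound_nonneg (n : ℕ) : 0 ≤ natBound v n := by
  unfold natBound; split_ifs <;> positivity

theorem natBound_le_natCast {n : ℕ} (hn : n ≠ 0) : natBound v n ≤ n := by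
  unfold natBound
  split_ifs
  · exact_mod_cast Nat.one_le_iff_ne_zero.2 hn
  · exact le_rfl

theorem natBound_mono : Monotone (natBound v) := fun m n h ↦ by
  unfold natBound; split_ifs <;> simp [h]

theorem natBound_mul (m n : ℕ) : natBound v (m * n) = natBound v m * natBound v n := by
  unfold natBound; split_ifs <;> simp

theorem map_natCast_le_natBound (n : ℕ) : v n ≤ natBound v n := by
  unfold natBound
  split_ifs with hv
  · exact hv.apply_natCast_le_one
  · induction n with
    | zero => simp
    | succ n ih =>
      rw [Nat.cast_succ, Nat.cast_succ]
      exact (v.add_le _ _).trans (by rw [map_one]; gcongr)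

theorem map_sum_natCast_mul_le {ι : Type*} (s : Finset ι) (n : ι → ℕ) {z : ι → K} {B : ℝ}
    (hB : 0 ≤ B) (hz : ∀ i ∈ s, v (z i) ≤ B) :
    v (∑ i ∈ s, n i * z i) ≤ natBound v (∑ i ∈ s, n i) * B := by
  have hterm (i : ι) (hi : i ∈ s) : v (n i * z i) ≤ natBound v (n i) * B := by
    rw [map_mul]
    exact mul_le_mul (map_natCast_le_natBound v _) (hz i hi) (v.nonneg _) (natBound_nonneg v _)
  unfold natBound at hterm ⊢
  split_ifs at hterm ⊢ with hv
  · obtain rfl | hs := s.eq_empty_or_nonempty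
    · simpa using hB
    · obtain ⟨i, hi, hle⟩ := hv.finset_image_add_of_nonempty (fun i ↦ n i * z i) hs
      exact hle.trans (hterm i hi)
  · rw [Nat.cast_sum, Finset.sum_mul]
    exact (v.sum_le _ _).trans (Finset.sum_le_sum hterm)

theorem map_add_le_natBound_two_mul {x y : K} {B : ℝ} (hx : v x ≤ B) (hy : v y ≤ B) :
    v (x + y) ≤ natBound v 2 * B := by
  have := map_sum_natCast_mul_le v Finset.univ ![1, 1] (z := ![x, y]) ((v.nonneg x).trans hx)
    (by simp [Fin.forall_fin_two, hx, hy])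
  simpa [Fin.sum_univ_two] using this

theorem map_sub_le_natBound_two_mul {x y : K} {B : ℝ} (hx : v x ≤ B) (hy : v y ≤ B) :
    v (x - y) ≤ natBound v 2 * B := by
  rw [sub_eq_add_neg]
  exact map_add_le_natBound_two_mul v hx (by rwa [map_neg_eq_map])

end NatBound

section HeightComparison

open Height AdmissibleAbsValues Multiset

variable {K : Type*} [Field K] [AdmissibleAbsValues K] {ι κ : Type*}

theorem hasFiniteMulSupport_iSup_nonarchAbsVal [Finite ι] {x : ι → K} (hx : x ≠ 0) :
    (fun v : nonarchAbsVal (K := K) ↦ ⨆ i, v.val (x i)).HasFiniteMulSupport := by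
  obtain ⟨i, hi⟩ : ∃ i, x i ≠ 0 := Function.ne_iff.mp hx
  have : Nonempty {j // x j ≠ 0} := ⟨i, hi⟩
  have : Nonempty ι := ⟨i⟩
  have hsupp : (fun v : nonarchAbsVal (K := K) ↦
      ⨆ j : {j // x j ≠ 0}, v.val (x j)).HasFiniteMulSupport := by
    fun_prop (disch := grind)
  convert! hsupp with v
  refine le_antisymm (ciSup_le fun j ↦ ?_) (ciSup_le fun j ↦ Finite.le_ciSup_of_le j.1 le_rfl)
  rcases eq_or_ne (x j) 0 with h | h
  · rw [h, v.val.map_zero]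
    exact Real.iSup_nonneg_of_nonnegHomClass v.val _
  · exact Finite.le_ciSup_of_le (⟨j, h⟩ : {j // x j ≠ 0}) le_rfl

theorem mulHeight_le_pow_totalWeight_mul [Finite ι] [Finite κ] {z : ι → K} {y : κ → K}
    (hz : z ≠ 0) (hy : y ≠ 0) {A : ℕ} (hA : A ≠ 0)
    (h : ∀ (v : AbsoluteValue K ℝ) (i : ι), ∃ j, v (z i) ≤ natBound v A * v (y j)) :
    mulHeight z ≤ A ^ totalWeight K * mulHeight y := by
  have hι : Nonempty ι := (Function.ne_iff.mp hz).nonempty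
  have hsup (v : AbsoluteValue K ℝ) : ⨆ i, v (z i) ≤ natBound v A * ⨆ j, v (y j) := by
    refine ciSup_le fun i ↦ ?_
    obtain ⟨j, hj⟩ := h v i
    exact hj.trans (mul_le_mul_of_nonneg_left (Finite.le_ciSup_of_le j le_rfl)
      (natBound_nonneg v A))
  rw [mulHeight_eq hz, mulHeight_eq hy, ← mul_assoc]
  refine mul_le_mul ?_ ?_ (finprod_nonneg fun v ↦ Real.iSup_nonneg_of_nonnegHomClass v.val _)
    (mul_nonneg (by positivity)
      (prod_map_nonneg fun v _ ↦ Real.iSup_nonneg_of_nonnegHomClass v _))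
  · rw [← prod_replicate, totalWeight, ← map_const', ← prod_map_mul]
    refine prod_map_le_prod_map₀ _ _ (fun v _ ↦ Real.iSup_nonneg_of_nonnegHomClass v _)
      fun v _ ↦ (hsup v).trans (mul_le_mul_of_nonneg_right ?_
        (Real.iSup_nonneg_of_nonnegHomClass v _))
    exact natBound_le_natCast v hA
  · refine finprod_le_finprod (hasFiniteMulSupport_iSup_nonarchAbsVal hz)
      (fun v ↦ Real.iSup_nonneg_of_nonnegHomClass v.val _)
      (hasFiniteMulSupport_iSup_nonarchAbsVal hy) fun v ↦ ?_
    simpa only [natBound, if_pos (isNonarchimedean _ v.2), one_mul] using hsup v.val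

end HeightComparison

section Coefficients

open Finset Polynomial

variable {K : Type*} [Field K]

theorem coeff_inv_X_add_C_pow {d : K} (hd : d ≠ 0) (N k : ℕ) :
    PowerSeries.coeff k ((PowerSeries.X + PowerSeries.C d)⁻¹ ^ (N + 1)) =
      (-1) ^ k * (N + k).choose N * d⁻¹ ^ (N + 1 + k) := by
  have hfactor : (PowerSeries.X + PowerSeries.C d : PowerSeries K) =
      PowerSeries.C d * PowerSeries.rescale (-d⁻¹) (1 - PowerSeries.X) := by
    rw [map_sub, map_one, PowerSeries.rescale_X, mul_sub, ← mul_assoc, ← map_mul, mul_neg,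
      mul_inv_cancel₀ hd, map_neg, map_one]
    ring
  have hinv : (PowerSeries.X + PowerSeries.C d : PowerSeries K)⁻¹ ^ (N + 1) =
      PowerSeries.C (d⁻¹ ^ (N + 1)) *
        PowerSeries.rescale (-d⁻¹) (PowerSeries.mk fun k ↦ ((N + k).choose N : K)) := by
    have hne : (PowerSeries.X + PowerSeries.C d : PowerSeries K) ^ (N + 1) ≠ 0 :=
      pow_ne_zero _ fun h ↦ hd (by simpa using congrArg PowerSeries.constantCoeff h)
    refine mul_right_cancel₀ hne ?_
    rw [← mul_pow, PowerSeries.inv_mul_cancel _ (by simpa using hd), one_pow, hfactor, mul_pow,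
      mul_mul_mul_comm, ← map_pow, ← map_mul, ← map_pow, ← map_mul,
      PowerSeries.mk_add_choose_mul_one_sub_pow_eq_one, ← mul_pow, inv_mul_cancel₀ hd]
    simp
  rw [hinv, PowerSeries.coeff_C_mul, PowerSeries.coeff_rescale, PowerSeries.coeff_mk, neg_pow,
    pow_add]
  ring

theorem mul_pow_mul_coeff_inv_pow_mul_inv_pow {d e : K} (hd : d ≠ 0) (he : e ≠ 0) {N k : ℕ}
    (hk : k ≤ N) :
    (d * e) ^ (2 * N + 1) * PowerSeries.coeff k ((PowerSeries.X + PowerSeries.C d)⁻¹ ^ (N + 1) *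
        (PowerSeries.X + PowerSeries.C e)⁻¹ ^ (N + 1)) =
      ∑ p ∈ antidiagonal k, (((N + p.1).choose N * (N + p.2).choose N : ℕ) : K) *
        ((-1) ^ k * (d ^ (N - p.1) * e ^ (N - p.2))) := by
  have hpow {c : K} (hc : c ≠ 0) {i : ℕ} (hi : i ≤ N) :
      c ^ (2 * N + 1) * c⁻¹ ^ (N + 1 + i) = c ^ (N - i) := by
    obtain ⟨j, rfl⟩ := Nat.exists_eq_add_of_le hi
    rw [show 2 * (i + j) + 1 = j + (i + j + 1 + i) by ring, pow_add, mul_assoc, ← mul_pow,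
      mul_inv_cancel₀ hc, one_pow, mul_one, Nat.add_sub_cancel_left]
  rw [PowerSeries.coeff_mul, mul_sum]
  refine sum_congr rfl fun p hp ↦ ?_
  rw [HasAntidiagonal.mem_antidiagonal] at hp
  rw [coeff_inv_X_add_C_pow hd, coeff_inv_X_add_C_pow he, ← hpow hd (by lia : p.1 ≤ N),
    ← hpow he (by lia : p.2 ≤ N), ← hp, pow_add (-1 : K)]
  push_cast
  ring

theorem sum_antidiagonal_choose_mul_choose_le {N k : ℕ} (hk : k ≤ N) :
    ∑ p ∈ antidiagonal k, (N + p.1).choose N * (N + p.2).choose N ≤ 16 ^ N := by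
  have hterm (p : ℕ × ℕ) (hp : p ∈ antidiagonal k) :
      (N + p.1).choose N * (N + p.2).choose N ≤ 2 ^ (2 * N + k) := by
    rw [HasAntidiagonal.mem_antidiagonal] at hp
    rw [show 2 * N + k = (N + p.1) + (N + p.2) by lia, pow_add]
    exact Nat.mul_le_mul (Nat.choose_le_two_pow ..) (Nat.choose_le_two_pow ..)
  calc ∑ p ∈ antidiagonal k, (N + p.1).choose N * (N + p.2).choose N
      ≤ (k + 1) * 2 ^ (2 * N + k) := by
        simpa using sum_le_card_nsmul _ _ _ hterm
    _ ≤ 2 ^ k * 2 ^ (2 * N + k) := Nat.mul_le_mul_right _ k.lt_two_pow_self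
    _ ≤ 2 ^ (4 * N) := by rw [← pow_add]; exact Nat.pow_le_pow_right (by simp) (by lia)
    _ = 16 ^ N := by rw [pow_mul]; norm_num

theorem map_mul_pow_mul_coeff_le (v : AbsoluteValue K ℝ) {d e : K} (hd : d ≠ 0) (he : e ≠ 0)
    {N k : ℕ} (hk : k ≤ N) {m : ℝ} (hdm : v d ≤ m) (hem : v e ≤ m) :
    v ((d * e) ^ (2 * N + 1) *
      PowerSeries.coeff k ((PowerSeries.X + PowerSeries.C d)⁻¹ ^ (N + 1) *
        (PowerSeries.X + PowerSeries.C e)⁻¹ ^ (N + 1))) ≤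
      natBound v (16 ^ N) * m ^ (2 * N - k) := by
  have hm : 0 ≤ m := (v.nonneg d).trans hdm
  rw [mul_pow_mul_coeff_inv_pow_mul_inv_pow hd he hk]
  refine (map_sum_natCast_mul_le v _ _ (B := m ^ (2 * N - k)) (by positivity) fun p hp ↦ ?_).trans
    (mul_le_mul_of_nonneg_right (natBound_mono v (sum_antidiagonal_choose_mul_choose_le hk))
      (by positivity))
  rw [HasAntidiagonal.mem_antidiagonal] at hp
  rw [show 2 * N - k = (N - p.1) + (N - p.2) by lia, pow_add, map_mul, map_mul, map_pow, map_pow,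
    map_pow, map_neg_eq_map, map_one, one_pow, one_mul]
  exact mul_le_mul (pow_le_pow_left₀ (v.nonneg d) hdm _) (pow_le_pow_left₀ (v.nonneg e) hem _)
    (pow_nonneg (v.nonneg e) _) (by positivity)

end Coefficients

section ResidueVec

open Finset Polynomial
open scoped Matrix

variable {ι K : Type*} [Fintype ι] [DecidableEq ι] [Field K] {N : ℕ}

/-- The vector of residues of `Q / ∏ j, (X - a j) ^ (N + 1)`, scaled so that its entries are
polynomials in the differences of the nodes. -/
noncomputable def residueVec (a : ι → K) (N : ℕ) : K[X] →ₗ[K] ι → K :=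
  LinearMap.pi fun i ↦ (cofactor a i).eval (a i) ^ (2 * N + 1) • residue a N i

theorem residueVec_apply (a : ι → K) (N : ℕ) (Q : K[X]) (i : ι) :
    residueVec a N Q i = (cofactor a i).eval (a i) ^ (2 * N + 1) * residue a N i Q := rfl

theorem eq_zero_of_residueVec_eq_zero [CharZero K] {a : ι → K} (ha : a.Injective) {Q : K[X]}
    (hQ : Q.natDegree + 1 < Fintype.card ι) (h : residueVec a N Q = 0) : Q = 0 :=
  eq_zero_of_residue_eq_zero ha hQ fun i ↦ (mul_eq_zero.1 (congrFun h i)).resolve_left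
    (pow_ne_zero _ (eval_cofactor_ne_zero ha i))

variable {a x t : Fin 3 → K}

theorem cofactor_fin_three (a : Fin 3 → K) (i : Fin 3) :
    cofactor a i = (X - C (a (i + 1))) * (X - C (a (i + 2))) := by
  have h : univ.erase i = {i + 1, i + 2} := by decide +revert
  rw [cofactor, h, prod_pair (by decide +revert)]

theorem eval_cofactor_fin_three (hax : ∀ i, a (i + 1) - a (i + 2) = x i) (i : Fin 3) :
    (cofactor a i).eval (a i) = -(x (i + 1) * x (i + 2)) := by
  have h1 := hax (i + 1)
  have h2 := hax (i + 2)
  rw [add_assoc, add_assoc, show (1 : Fin 3) + 2 = 0 by rfl, show (1 : Fin 3) + 1 = 2 by rfl,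
    add_zero] at h1
  rw [add_assoc, add_assoc, show (2 : Fin 3) + 2 = 1 by rfl, show (2 : Fin 3) + 1 = 0 by rfl,
    add_zero] at h2
  rw [cofactor_fin_three, eval_mul, eval_sub, eval_sub, eval_X, eval_C, eval_C, ← h1, ← h2]
  ring

theorem exists_sub_eq_of_sum_eq_zero (hsum : ∑ i, x i = 0) :
    ∃ a : Fin 3 → K, ∀ i, a (i + 1) - a (i + 2) = x i := by
  rw [Fin.sum_univ_three] at hsum
  refine ⟨![0, -x 2, x 1], fun i ↦ ?_⟩
  fin_cases i
  · simp only [Fin.zero_eta, Fin.isValue, zero_add, Matrix.cons_val]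
    linear_combination -hsum
  · simp
  · simp

theorem exists_sub_eq_or_eq_neg (hax : ∀ i, a (i + 1) - a (i + 2) = x i) {i j : Fin 3}
    (hij : i ≠ j) : ∃ k, a i - a j = x k ∨ a i - a j = -x k := by
  obtain ⟨k, ⟨rfl, rfl⟩ | ⟨rfl, rfl⟩⟩ :
      ∃ k, (i = k + 1 ∧ j = k + 2) ∨ (i = k + 2 ∧ j = k + 1) := by decide +revert
  exacts [⟨k, .inl (hax k)⟩, ⟨k, .inr (by rw [← hax k, neg_sub])⟩]

theorem injective_of_sub_ne_zero (hax : ∀ i, a (i + 1) - a (i + 2) = x i) (hx : ∀ i, x i ≠ 0) :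
    a.Injective := by
  rw [Function.injective_iff_pairwise_ne]
  intro i j hij
  obtain ⟨k, hk | hk⟩ := exists_sub_eq_or_eq_neg hax hij
  · exact sub_ne_zero.1 (hk ▸ hx k)
  · exact sub_ne_zero.1 (hk ▸ neg_ne_zero.2 (hx k))

theorem residueVec_dotProduct_pow (hax : ∀ i, a (i + 1) - a (i + 2) = x i) (hx : ∀ i, x i ≠ 0)
    {Q : K[X]} (hQ : Q.natDegree ≤ 1) : residueVec a N Q ⬝ᵥ x ^ (2 * N + 1) = 0 := by
  have hterm (i : Fin 3) : residueVec a N Q i * (x ^ (2 * N + 1)) i =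
      (-∏ j, x j) ^ (2 * N + 1) * residue a N i Q := by
    have hprod : ∏ j, x j = x (i + 1) * x (i + 2) * x i := by
      rw [Fin.prod_univ_three]
      fin_cases i <;>
        simp only [Fin.zero_eta, Fin.mk_one, Fin.reduceFinMk, Fin.reduceAdd, zero_add] <;> ring
    rw [residueVec_apply, eval_cofactor_fin_three hax, Pi.pow_apply, hprod]
    ring
  rw [dotProduct, sum_congr rfl fun i _ ↦ hterm i, ← mul_sum, sum_residue_eq_zero
    (injective_of_sub_ne_zero hax hx) (by rw [Fintype.card_fin]; lia), mul_zero]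

theorem exists_crossProduct_residueVec_ne_zero [CharZero K] (ha : a.Injective) (ht : t ≠ 0) :
    ∃ j, t ⨯₃ residueVec a N (X - C (a j)) ≠ 0 := by
  by_contra! h
  have hpar (j : Fin 3) : ∃ c : K, c • t = residueVec a N (X - C (a j)) := by
    by_contra! hc
    exact crossProduct_ne_zero_iff_linearIndependent.2 ((LinearIndependent.pair_iff' ht).2 hc) (h j)
  obtain ⟨c, hc⟩ := hpar 0
  obtain ⟨d, hd⟩ := hpar 1
  have hdeg : (d • (X - C (a 0)) - c • (X - C (a 1))).natDegree ≤ 1 := by compute_degree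
  have hzero : d • (X - C (a 0)) - c • (X - C (a 1)) = 0 := by
    refine eq_zero_of_residueVec_eq_zero (N := N) ha (by rw [Fintype.card_fin]; lia) ?_
    rw [map_sub, map_smul, map_smul, ← hc, ← hd, smul_smul, smul_smul, mul_comm, sub_self]
  have hc0 : c = 0 := by
    have := congrArg (eval (a 0)) hzero
    simpa [sub_eq_zero, ha.eq_iff] using this
  have hX : X - C (a 0) = 0 := by
    refine eq_zero_of_residueVec_eq_zero (N := N) ha (by simp) ?_
    rw [← hc, hc0, zero_smul]
  exact X_sub_C_ne_zero _ hX

theorem map_residueVec_X_sub_C_le (v : AbsoluteValue K ℝ) (ha : a.Injective) {m : ℝ}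
    (hm : ∀ i j, v (a i - a j) ≤ m) (M : ℕ) (i j : Fin 3) :
    v (residueVec a (M + 1) (X - C (a j)) i) ≤ natBound v (2 * 16 ^ (M + 1)) * m ^ (M + 2) := by
  set F : PowerSeries K := (PowerSeries.X + PowerSeries.C (a i - a (i + 1)))⁻¹ ^ (M + 2) *
    (PowerSeries.X + PowerSeries.C (a i - a (i + 2)))⁻¹ ^ (M + 2) with hF
  have htaylor (c : K) : (taylor (a i) (X - C c) : PowerSeries K) =
      PowerSeries.X + PowerSeries.C (a i - c) := by
    simp [add_sub_assoc]
  have hres : residue a (M + 1) i (X - C (a j)) =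
      PowerSeries.coeff M F + (a i - a j) * PowerSeries.coeff (M + 1) F := by
    rw [residue_apply, cofactor_fin_three, taylor_mul, Polynomial.coe_mul, htaylor, htaylor,
      htaylor, PowerSeries.mul_inv_rev, mul_pow, mul_comm (_ ^ _), ← hF, add_mul, map_add,
      PowerSeries.coeff_succ_X_mul, PowerSeries.coeff_C_mul]
  have hne (k : Fin 3) (hk : i ≠ k) : a i - a k ≠ 0 := sub_ne_zero.2 (ha.ne hk)
  have hcoeff {k : ℕ} (hk : k ≤ M + 1) :=
    map_mul_pow_mul_coeff_le v (hne (i + 1) (by simp)) (hne (i + 2) (by simp)) hk (hm _ _) (hm _ _)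
  rw [residueVec_apply, hres, cofactor_fin_three, eval_mul, eval_sub, eval_sub, eval_X, eval_C,
    eval_C, mul_add, mul_left_comm, natBound_mul, mul_assoc]
  refine map_add_le_natBound_two_mul v ((hcoeff M.le_succ).trans_eq ?_) ?_
  · rw [show 2 * (M + 1) - M = M + 2 by lia]
  · rw [map_mul, pow_succ' m, mul_left_comm]
    refine mul_le_mul (hm _ _) ((hcoeff le_rfl).trans_eq ?_) (v.nonneg _)
      ((v.nonneg _).trans (hm i j))
    rw [show 2 * (M + 1) - (M + 1) = M + 1 by lia]

end ResidueVec

section KeyInequality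

open Finset Height Polynomial
open scoped Matrix

variable {K : Type*} [Field K]

theorem exists_smul_eq_crossProduct {p t w : Fin 3 → K} (hp : p ≠ 0) (ht : t ⬝ᵥ p = 0)
    (hw : w ⬝ᵥ p = 0) : ∃ c : K, c • p = t ⨯₃ w := by
  have hcross : p ⨯₃ (t ⨯₃ w) = 0 := by
    rw [cross_cross_eq_smul_sub_smul', dotProduct_comm p w, hw, ht, zero_smul, zero_smul, sub_self]
  by_contra! hc
  exact crossProduct_ne_zero_iff_linearIndependent.2 ((LinearIndependent.pair_iff' hp).2 hc) hcross

theorem map_crossProduct_apply_le (v : AbsoluteValue K ℝ) {t w : Fin 3 → K} {T B : ℝ}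
    (ht : ∀ i, v (t i) ≤ T) (hw : ∀ i, v (w i) ≤ B) (i : Fin 3) :
    v ((t ⨯₃ w) i) ≤ natBound v 2 * (T * B) := by
  have hmul (j k : Fin 3) : v (t j * w k) ≤ T * B := by
    rw [map_mul]
    exact mul_le_mul (ht j) (hw k) (v.nonneg _) ((v.nonneg _).trans (ht 0))
  rw [cross_apply]
  fin_cases i <;> exact map_sub_le_natBound_two_mul v (hmul _ _) (hmul _ _)

theorem mulHeight_pow_le_of_dotProduct_eq_zero [CharZero K] [AdmissibleAbsValues K] (M : ℕ)
    {t x : Fin 3 → K} (ht : t ≠ 0) (hx : ∀ i, x i ≠ 0) (hsum : ∑ i, x i = 0)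
    (htx : t ⬝ᵥ x ^ (2 * (M + 1) + 1) = 0) :
    mulHeight x ^ (2 * (M + 1) + 1) ≤
      (16 ^ (M + 2)) ^ totalWeight K * (mulHeight t * mulHeight x ^ (M + 2)) := by
  obtain ⟨a, hax⟩ := exists_sub_eq_of_sum_eq_zero hsum
  have hainj := injective_of_sub_ne_zero hax hx
  have hx0 : x ≠ 0 := fun h ↦ hx 0 (congrFun h 0)
  have hpow : x ^ (2 * (M + 1) + 1) ≠ 0 := pow_ne_zero _ hx0
  obtain ⟨j, hj⟩ := exists_crossProduct_residueVec_ne_zero (N := M + 1) hainj ht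
  set w := residueVec a (M + 1) (X - C (a j))
  obtain ⟨c, hc⟩ := exists_smul_eq_crossProduct hpow htx
    (residueVec_dotProduct_pow hax hx (natDegree_X_sub_C_le (a j)))
  have hc0 : c ≠ 0 := by rintro rfl; exact hj (by rw [← hc, zero_smul])
  rw [← mulHeight_pow, ← mulHeight_smul_eq_mulHeight _ hc0, hc, ← mulHeight_pow,
    ← mulHeight_fun_mul_eq ht (pow_ne_zero _ hx0)]
  have hy : (fun q : Fin 3 × Fin 3 ↦ t q.1 * (x ^ (M + 2)) q.2) ≠ 0 := by
    obtain ⟨i, hi⟩ := Function.ne_iff.1 ht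
    exact Function.ne_iff.2 ⟨(i, 0), mul_ne_zero hi (pow_ne_zero _ (hx 0))⟩
  refine mod_cast mulHeight_le_pow_totalWeight_mul hj hy (A := 16 ^ (M + 2)) (by simp) fun v i ↦ ?_
  obtain ⟨p, hp⟩ := Finite.exists_max fun p ↦ v (t p)
  obtain ⟨q, hq⟩ := Finite.exists_max fun q ↦ v (x q)
  have hdiff (k l : Fin 3) : v (a k - a l) ≤ v (x q) := by
    obtain rfl | hkl := eq_or_ne k l
    · rw [sub_self, map_zero]
      exact v.nonneg _
    · obtain ⟨i, hi | hi⟩ := exists_sub_eq_or_eq_neg hax hkl <;> simpa [hi] using hq i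
  refine ⟨(p, q), (map_crossProduct_apply_le v hp
    (fun k ↦ map_residueVec_X_sub_C_le v hainj hdiff M k j) i).trans ?_⟩
  rw [map_mul, Pi.pow_apply, map_pow, mul_left_comm (v (t p)), ← mul_assoc, ← natBound_mul]
  gcongr
  refine natBound_mono v ?_
  lia

end KeyInequality

section PlacesOfS

open Height

variable {K ι : Type*} [Field K] [NumberField K] {S : Set (HeightOneSpectrum (𝓞 K))}

variable (S) in
/-- The normalized absolute values of `K` at the archimedean places and at the places in `S`,
indexed by the disjoint union of the two kinds of places; the exponent `v.mult` makes the product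
formula hold without weights. -/
noncomputable def normAt : InfinitePlace K ⊕ S → K →*₀ ℝ
  | .inl v => (powMonoidWithZeroHom v.mult_ne_zero).comp v.1.toMonoidWithZeroHom
  | .inr v => (FinitePlace.mk v.1).1.toMonoidWithZeroHom

theorem normAt_pos (s : InfinitePlace K ⊕ S) (a : Kˣ) : 0 < normAt S s a := by
  rcases s with v | v
  · exact pow_pos (InfinitePlace.pos_iff.2 a.ne_zero) _
  · exact FinitePlace.pos_iff.2 a.ne_zero

theorem normAt_neg_one (s : InfinitePlace K ⊕ S) : normAt S s (-1) = 1 := by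
  rcases s with v | v <;> simp [normAt]

theorem finitePlace_mk_eq_one_of_mem_unit {a : Kˣ} (ha : a ∈ S.unit K)
    {v : HeightOneSpectrum (𝓞 K)} (hv : v ∉ S) : FinitePlace.mk v (a : K) = 1 := by
  rw [FinitePlace.mk_apply, FinitePlace.norm_embedding, HeightOneSpectrum.adicAbv_def]
  have : v.valuation K (a : K) = 1 := Set.unit_valuation_eq_one S K ⟨a, ha⟩ hv
  simp [this]

section

variable [Fintype S]

theorem finprod_finitePlace_eq_prod_of_eq_one {g : FinitePlace K → ℝ}
    (hg : ∀ v ∉ S, g (FinitePlace.mk v) = 1) :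
    ∏ᶠ w, g w = ∏ v : S, g (FinitePlace.mk v.1) := by
  rw [← finprod_comp_equiv FinitePlace.equivHeightOneSpectrum.symm, ← finprod_eq_prod_of_fintype,
    finprod_set_coe_eq_finprod_mem (f := fun v ↦ g (FinitePlace.mk v)) S]
  refine finprod_congr fun v ↦ ?_
  by_cases hv : v ∈ S
  · simp only [hv, finprod_true]
    rfl
  · simp only [hv, finprod_false]
    exact hg v hv

theorem prod_normAt_eq_one {a : Kˣ} (ha : a ∈ S.unit K) : ∏ s, normAt S s a = 1 := by
  rw [Fintype.prod_sum_type, ← prod_abs_eq_one a.ne_zero,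
    finprod_finitePlace_eq_prod_of_eq_one fun v ↦ finitePlace_mk_eq_one_of_mem_unit ha]
  rfl

theorem sum_log_normAt_eq_zero {a : Kˣ} (ha : a ∈ S.unit K) :
    ∑ s, Real.log (normAt S s a) = 0 := by
  rw [← Real.log_prod fun s _ ↦ (normAt_pos s a).ne', prod_normAt_eq_one ha, Real.log_one]

variable [Nonempty ι] {x : ι → Kˣ}

theorem mulHeight_eq_prod_iSup_normAt (hx : ∀ i, x i ∈ S.unit K) :
    mulHeight (fun i ↦ (x i : K)) = ∏ s, ⨆ i, normAt S s (x i) := by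
  rw [NumberField.mulHeight_eq (Function.ne_iff.2 ⟨Classical.arbitrary ι, (x _).ne_zero⟩),
    Fintype.prod_sum_type, finprod_finitePlace_eq_prod_of_eq_one (S := S) fun v hv ↦ by
      simp only [finitePlace_mk_eq_one_of_mem_unit (hx _) hv, ciSup_const]]
  simp_rw [Real.iSup_pow fun i ↦ apply_nonneg _ (x i : K)]
  rfl

variable [Finite ι]

theorem logHeight_eq_sum_iSup_log_normAt (hx : ∀ i, x i ∈ S.unit K) :
    logHeight (fun i ↦ (x i : K)) = ∑ s, ⨆ i, Real.log (normAt S s (x i)) := by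
  rw [logHeight_eq_log_mulHeight, mulHeight_eq_prod_iSup_normAt hx, Real.log_prod]
  · exact Finset.sum_congr rfl fun s _ ↦ Finite.map_iSup_of_monotoneOn
      (f := fun i ↦ normAt S s (x i)) Real.strictMonoOn_log.monotoneOn fun i ↦ normAt_pos s (x i)
  · exact fun s _ ↦ ((normAt_pos s _).trans_le
      (Finite.le_ciSup (fun i ↦ normAt S s (x i)) (Classical.arbitrary ι))).ne'

theorem logHeight_le_card_mul (hx : ∀ i, x i ∈ S.unit K) {B : ℝ}
    (hB : ∀ s i, Real.log (normAt S s (x i)) ≤ B) :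
    logHeight (fun i ↦ (x i : K)) ≤ Fintype.card (InfinitePlace K ⊕ S) * B := by
  rw [logHeight_eq_sum_iSup_log_normAt hx, ← nsmul_eq_mul, ← Finset.card_univ]
  exact Finset.sum_le_card_nsmul _ _ _ fun s _ ↦ ciSup_le (hB s)

end

theorem abs_log_normAt_le_logHeight [Finite S] [Finite ι] {x : ι → Kˣ}
    (hx : ∀ i, x i ∈ S.unit K) {j : ι} (hj : x j = -1) (s : InfinitePlace K ⊕ S) (i : ι) :
    |Real.log (normAt S s (x i))| ≤ logHeight (fun i ↦ (x i : K)) := by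
  classical
  have := Fintype.ofFinite S
  have : Nonempty ι := ⟨j⟩
  have le_sup (s) (i) : Real.log (normAt S s (x i)) ≤ ⨆ i, Real.log (normAt S s (x i)) :=
    Finite.le_ciSup_of_le i le_rfl
  have sup_nonneg (s) : 0 ≤ ⨆ i, Real.log (normAt S s (x i)) := by
    simpa [hj, normAt_neg_one] using le_sup s j
  rw [logHeight_eq_sum_iSup_log_normAt hx, abs_le]
  constructor
  · have hsum := sum_log_normAt_eq_zero (hx i)
    rw [← Finset.add_sum_erase _ _ (Finset.mem_univ s)] at hsum
    have : ∑ s ∈ Finset.univ.erase s, Real.log (normAt S s (x i)) ≤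
        ∑ s, ⨆ i, Real.log (normAt S s (x i)) :=
      (Finset.sum_le_sum fun s _ ↦ le_sup s i).trans <|
        Finset.sum_le_sum_of_subset_of_nonneg (Finset.erase_subset _ _) fun s _ _ ↦ sup_nonneg s
    linarith
  · exact (le_sup s i).trans
      (Finset.single_le_sum (fun s _ ↦ sup_nonneg s) (Finset.mem_univ s))

end PlacesOfS

section UnitEquation

open Height Matrix

theorem exists_mul_lt_and_abs_sub_le {α ι : Type*} [Finite ι] {A : Set α} (hA : A.Infinite)
    {h : α → ℝ} (hpos : ∀ u ∈ A, 0 < h u) (hfin : ∀ B, {u ∈ A | h u ≤ B}.Finite)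
    {f : α → ι → ℝ} (hf : ∀ u ∈ A, ∀ i, |f u i| ≤ h u) {ε : ℝ} (hε : 0 < ε) (R : ℝ) :
    ∃ x ∈ A, ∃ y ∈ A, R * h x < h y ∧ ∀ i, |f y i - h y / h x * f x i| ≤ ε * h y := by
  have := Fintype.ofFinite ι
  set g : α → ι → ℝ := fun u i ↦ f u i / h u
  have hg (u) (hu : u ∈ A) : g u ∈ Metric.closedBall 0 1 := by
    refine mem_closedBall_zero_iff.2 ((pi_norm_le_iff_of_nonneg zero_le_one).2 fun i ↦ ?_)
    rw [Real.norm_eq_abs, abs_div, abs_of_pos (hpos u hu)]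
    exact (div_le_one (hpos u hu)).2 (hf u hu i)
  obtain ⟨t, ht, hcover⟩ := Metric.totallyBounded_iff.1
    (isCompact_closedBall (0 : ι → ℝ) 1).totallyBounded (ε / 2) (half_pos hε)
  obtain ⟨z, -, hz⟩ : ∃ z ∈ t, {u ∈ A | g u ∈ Metric.ball z (ε / 2)}.Infinite := by
    by_contra! hcon
    refine hA ((ht.biUnion hcon).subset fun u hu ↦ ?_)
    obtain ⟨z, hz, huz⟩ := Set.mem_iUnion₂.1 (hcover (hg u hu))
    exact Set.mem_biUnion hz ⟨hu, huz⟩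
  obtain ⟨x, hxA, hx⟩ := hz.nonempty
  obtain ⟨y, ⟨hyA, hy⟩, hyx⟩ := (hz.sdiff (hfin (R * h x))).nonempty
  refine ⟨x, hxA, y, hyA, not_le.1 fun hle ↦ hyx ⟨hyA, hle⟩, fun i ↦ ?_⟩
  have hdist : |g y i - g x i| ≤ ε := by
    rw [← Real.dist_eq]
    linarith [dist_le_pi_dist (g y) (g x) i, dist_triangle_right (g y) (g x) z,
      Metric.mem_ball.1 hx, Metric.mem_ball.1 hy]
  have hx0 := (hpos x hxA).ne'
  have hy0 := hpos y hyA
  have hscale : f y i - h y / h x * f x i = (g y i - g x i) * h y := by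
    simp only [g]
    field_simp
  rw [hscale, abs_mul, abs_of_pos hy0]
  exact mul_le_mul_of_nonneg_right hdist hy0.le

theorem exists_nat_abs_sub_le_and_lt {D : ℕ} {c h l : ℝ} (hh : 0 < h) (hc : 8 * c ≤ h)
    (hl : 8 * D + 20 < l) :
    ∃ M : ℕ, |l - (2 * M + 3)| ≤ 2 ∧
      (M + 2) * c + D * (1 / (8 * (D + 1)) * (l * h) + 2 * h) + (M + 2) * h < (2 * M + 3) * h := by
  have : (0 : ℝ) ≤ D := by positivity
  have hfloor : (⌊(l - 3) / 2⌋₊ : ℝ) ≤ (l - 3) / 2 := Nat.floor_le (by linarith)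
  have hlt : (l - 3) / 2 < ⌊(l - 3) / 2⌋₊ + 1 := Nat.lt_floor_add_one _
  generalize ⌊(l - 3) / 2⌋₊ = M at hfloor hlt
  refine ⟨M, abs_le.2 ⟨by linarith, by linarith⟩, ?_⟩
  have hfrac : D * (1 / (8 * (D + 1)) * (l * h) + 2 * h) ≤ (2 * M + 5) / 8 * h + 2 * D * h :=
    calc D * (1 / (8 * (D + 1)) * (l * h) + 2 * h)
      _ ≤ D * (1 / (8 * (D + 1)) * ((2 * M + 5) * h) + 2 * h) := by gcongr; linarith
      _ = D / (D + 1) * ((2 * M + 5) / 8 * h) + 2 * D * h := by field_simp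
      _ ≤ 1 * ((2 * M + 5) / 8 * h) + 2 * D * h := by
        gcongr
        exact (div_le_one (by positivity)).2 (by linarith)
      _ = _ := by ring
  have hconst : (M + 2) * c ≤ (M + 2) * (h / 8) := by gcongr; linarith
  have hM : 0 < (M + 1 - ((M + 2) / 8 + (2 * M + 5) / 8 + 2 * D)) * h := mul_pos (by linarith) hh
  linarith

variable {K : Type*} [Field K]

theorem logHeight_pow_le_of_dotProduct_eq_zero [CharZero K] [AdmissibleAbsValues K] (M : ℕ)
    {t x : Fin 3 → K} (ht : t ≠ 0) (hx : ∀ i, x i ≠ 0) (hsum : ∑ i, x i = 0)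
    (htx : t ⬝ᵥ x ^ (2 * (M + 1) + 1) = 0) :
    (2 * M + 3) * logHeight x ≤
      (M + 2) * (totalWeight K * Real.log 16) + logHeight t + (M + 2) * logHeight x := by
  have h := Real.log_le_log (pow_pos (mulHeight_pos x) _)
    (mulHeight_pow_le_of_dotProduct_eq_zero M ht hx hsum htx)
  have hx0 := mulHeight_pos x
  have ht0 := mulHeight_pos t
  rw [Real.log_mul (by positivity) (by positivity), Real.log_mul (by positivity) (by positivity),
    Real.log_pow, Real.log_pow, Real.log_pow, Real.log_pow] at h
  simp only [logHeight_eq_log_mulHeight]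
  push_cast at h
  linarith

/-- The point of the line `x₀ + x₁ + x₂ = 0` given by a solution of `u + v = 1` in units. -/
def unitPoint (p : Kˣ × Kˣ) : Fin 3 → Kˣ := ![p.1, p.2, -1]

theorem sum_unitPoint_eq_zero {p : Kˣ × Kˣ} (hp : (p.1 + p.2 : K) = 1) :
    ∑ i, (unitPoint p i : K) = 0 := by
  simp [unitPoint, Fin.sum_univ_three, hp]

variable [NumberField K] {S : Set (HeightOneSpectrum (𝓞 K))}

theorem exists_lt_abs_log_normAt_sub [Fintype S] {x y : Fin 3 → Kˣ}
    (hx : ∀ i, x i ∈ S.unit K) (hy : ∀ i, y i ∈ S.unit K)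
    (hxsum : ∑ i, (x i : K) = 0) (hysum : ∑ i, (y i : K) = 0) {j : Fin 3} (hxj : x j = -1)
    (hpos : 0 < logHeight fun i ↦ (x i : K))
    (hlarge : 8 * (totalWeight K * Real.log 16) ≤ logHeight fun i ↦ (x i : K))
    (hgap : (8 * Fintype.card (InfinitePlace K ⊕ S) + 20) * logHeight (fun i ↦ (x i : K)) <
      logHeight fun i ↦ (y i : K)) :
    ∃ s i, 1 / (8 * (Fintype.card (InfinitePlace K ⊕ S) + 1)) * logHeight (fun i ↦ (y i : K)) <
      |Real.log (normAt S s (y i)) - logHeight (fun i ↦ (y i : K)) /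
        logHeight (fun i ↦ (x i : K)) * Real.log (normAt S s (x i))| := by
  set D := Fintype.card (InfinitePlace K ⊕ S)
  set h := logHeight fun i ↦ (x i : K)
  set l := logHeight (fun i ↦ (y i : K)) / h
  have hly : logHeight (fun i ↦ (y i : K)) = l * h := (div_mul_cancel₀ _ hpos.ne').symm
  by_contra! hclose
  obtain ⟨M, hlM, hlt⟩ := exists_nat_abs_sub_le_and_lt hpos hlarge ((lt_div_iff₀ hpos).2 hgap)
  -- The odd number `2 * M + 3` is close to `l`, so the quotient below has small height.
  set t : Fin 3 → Kˣ := fun i ↦ y i / x i ^ (2 * (M + 1) + 1) with ht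
  have htS (i) : t i ∈ S.unit K := div_mem (hy i) (pow_mem (hx i) _)
  have htlog (s) (i) : Real.log (normAt S s (t i)) ≤ 1 / (8 * (D + 1)) * (l * h) + 2 * h := by
    have hlog : Real.log (normAt S s (t i)) = (Real.log (normAt S s (y i)) -
        l * Real.log (normAt S s (x i))) + (l - (2 * M + 3)) * Real.log (normAt S s (x i)) := by
      simp only [ht, Units.val_div_eq_div_val, Units.val_pow_eq_pow_val, map_div₀, map_pow]
      rw [Real.log_div (normAt_pos s _).ne' (pow_pos (normAt_pos s _) _).ne', Real.log_pow]
      push_cast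
      ring
    have hrest : (l - (2 * M + 3)) * Real.log (normAt S s (x i)) ≤ 2 * h :=
      (le_abs_self _).trans <| (abs_mul _ _).trans_le <|
        mul_le_mul hlM (abs_log_normAt_le_logHeight hx hxj s i) (abs_nonneg _) zero_le_two
    rw [hlog, ← hly]
    exact add_le_add ((le_abs_self _).trans (hclose s i)) hrest
  have hkey := logHeight_pow_le_of_dotProduct_eq_zero M (t := fun i ↦ (t i : K))
    (Function.ne_iff.2 ⟨0, (t 0).ne_zero⟩) (fun i ↦ (x i).ne_zero) hxsum
    (by simpa [dotProduct, ht] using hysum)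
  linarith [logHeight_le_card_mul htS htlog]

theorem logHeight₁_le_logHeight_unitPoint (p : Kˣ × Kˣ) :
    logHeight₁ (p.1 : K) ≤ logHeight fun i ↦ (unitPoint p i : K) := by
  have h := logHeight_comp_le (![0, 2] : Fin 2 → Fin 3) fun i ↦ (unitPoint p i : K)
  have hcomp : (fun i ↦ (unitPoint p i : K)) ∘ (![0, 2] : Fin 2 → Fin 3) = ![(p.1 : K), -1] := by
    ext i
    fin_cases i <;> simp [unitPoint]
  rwa [hcomp, ← logHeight₁_div_eq_logHeight, div_neg, div_one, logHeight₁_neg] at h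

variable (S) in
/-- The solutions of the `S`-unit equation `u + v = 1`. -/
def unitEquationSolutions : Set (Kˣ × Kˣ) :=
  {p | p.1 ∈ S.unit K ∧ p.2 ∈ S.unit K ∧ (p.1 + p.2 : K) = 1}

theorem finite_setOf_mem_unitEquationSolutions_logHeight_le (B : ℝ) :
    {p ∈ unitEquationSolutions S | logHeight (fun i ↦ (unitPoint p i : K)) ≤ B}.Finite := by
  refine Set.Finite.of_finite_image (f := fun p ↦ (p.1 : K))
    ((NumberField.finite_setOfPred_logHeight₁_le K B).subset ?_) ?_
  · rintro _ ⟨p, ⟨-, hp⟩, rfl⟩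
    exact (logHeight₁_le_logHeight_unitPoint p).trans hp
  · rintro p ⟨⟨-, -, hp⟩, -⟩ q ⟨⟨-, -, hq⟩, -⟩ (h : (p.1 : K) = q.1)
    refine Prod.ext (Units.ext h) (Units.ext ?_)
    linear_combination hp - hq - h

theorem unitPoint_mem_unit {p : Kˣ × Kˣ} (hp : p ∈ unitEquationSolutions S) (i : Fin 3) :
    unitPoint p i ∈ S.unit K := by
  fin_cases i
  · exact hp.1
  · exact hp.2.1
  · exact fun v _ ↦ by simp [unitPoint]

theorem finite_unitEquationSolutions (hS : S.Finite) : (unitEquationSolutions S).Finite := by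
  have := hS.fintype
  by_contra hinf
  set c : ℝ := totalWeight K * Real.log 16
  have hc : 0 ≤ c := mul_nonneg (by positivity) (Real.log_nonneg (by norm_num))
  set h : Kˣ × Kˣ → ℝ := fun p ↦ logHeight fun i ↦ (unitPoint p i : K)
  set A : Set (Kˣ × Kˣ) := {p ∈ unitEquationSolutions S | 8 * c + 1 < h p}
  have hA : A.Infinite := fun hAfin ↦ hinf <|
    (hAfin.union (finite_setOf_mem_unitEquationSolutions_logHeight_le (8 * c + 1))).subset
      fun p hp ↦ (lt_or_ge (8 * c + 1) (h p)).imp (⟨hp, ·⟩) (⟨hp, ·⟩)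
  obtain ⟨p, ⟨hp, hpc⟩, q, ⟨hq, -⟩, hpq, hclose⟩ := exists_mul_lt_and_abs_sub_le hA
    (h := h) (f := fun p (s : (InfinitePlace K ⊕ S) × Fin 3) ↦
      Real.log (normAt S s.1 (unitPoint p s.2)))
    (ε := 1 / (8 * (Fintype.card (InfinitePlace K ⊕ S) + 1)))
    (fun p hp ↦ by linarith [hp.2])
    (fun B ↦ (finite_setOf_mem_unitEquationSolutions_logHeight_le B).subset
      fun p hp ↦ ⟨hp.1.1, hp.2⟩)
    (fun p hp s ↦ abs_log_normAt_le_logHeight (unitPoint_mem_unit hp.1) (j := 2) rfl s.1 s.2)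
    (by positivity) (8 * Fintype.card (InfinitePlace K ⊕ S) + 20)
  obtain ⟨s, i, hlt⟩ := exists_lt_abs_log_normAt_sub (unitPoint_mem_unit hp)
    (unitPoint_mem_unit hq) (sum_unitPoint_eq_zero hp.2.2) (sum_unitPoint_eq_zero hq.2.2)
    (j := 2) rfl (show 0 < h p by linarith) (show 8 * c ≤ h p by linarith) hpq
  exact hlt.not_ge (hclose (s, i))

end UnitEquation

section SelmerGroup

open scoped nonZeroDivisors WithZero

variable {R K : Type*} [CommRing R] [IsDedekindDomain R] [Field K] [Algebra R K]
  [IsFractionRing R K]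

theorem valuationOfNeZeroMod_mk (v : HeightOneSpectrum R) (n : ℕ) (x : Kˣ) :
    v.valuationOfNeZeroMod n (QuotientGroup.mk x) =
      Multiplicative.ofAdd ((v.valuationOfNeZero x).toAdd : ZMod n) :=
  rfl

theorem valuationOfNeZeroMod_mk_eq_one_iff (v : HeightOneSpectrum R) (n : ℕ) (x : Kˣ) :
    v.valuationOfNeZeroMod n (QuotientGroup.mk x) = 1 ↔
      (n : ℤ) ∣ (v.valuationOfNeZero x).toAdd := by
  rw [valuationOfNeZeroMod_mk, ofAdd_eq_one, ZMod.intCast_zmod_eq_zero_iff_dvd]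

theorem count_spanSingleton (v : HeightOneSpectrum R) (x : Kˣ) :
    FractionalIdeal.count K v (FractionalIdeal.spanSingleton R⁰ (x : K)) =
      -(v.valuationOfNeZero x).toAdd := by
  classical
  have h := IsLocalization.mk'_sec (M := R⁰) K (x : K)
  rw [FractionalIdeal.count_well_defined K v (a := (IsLocalization.sec R⁰ (x : K)).2)
    (J := Ideal.span {(IsLocalization.sec R⁰ (x : K)).1})]
  · change _ = -(_ - _)
    ring
  · simp [FractionalIdeal.spanSingleton_eq_zero_iff]
  · rw [FractionalIdeal.coeIdeal_span_singleton, FractionalIdeal.spanSingleton_mul_spanSingleton,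
      inv_mul_eq_div, ← IsFractionRing.mk'_eq_div, h]

theorem exists_pow_eq_of_forall_dvd_count (n : ℕ) [NeZero n] {I : (FractionalIdeal R⁰ K)ˣ}
    (hI : ∀ v : HeightOneSpectrum R, (n : ℤ) ∣ FractionalIdeal.count K v I) :
    ∃ J : (FractionalIdeal R⁰ K)ˣ, J ^ n = I := by
  choose e he using hI
  have hfin : (Function.HasFiniteMulSupport fun v : HeightOneSpectrum R ↦
      (v.asIdeal : FractionalIdeal R⁰ K) ^ e v) := by
    refine (FractionalIdeal.finite_factors (I : FractionalIdeal R⁰ K)).subset fun v hv h0 ↦ hv ?_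
    have : e v = 0 := by simpa [he, NeZero.ne n] using h0
    simp [this]
  have hpow : (∏ᶠ v : HeightOneSpectrum R, (v.asIdeal : FractionalIdeal R⁰ K) ^ e v) ^ n = I := by
    rw [finprod_pow hfin]
    conv_rhs => rw [← FractionalIdeal.finprod_heightOneSpectrum_factorization' K I.ne_zero]
    refine finprod_congr fun v ↦ ?_
    rw [he, mul_comm, zpow_mul, zpow_natCast]
  have hunit : IsUnit (∏ᶠ v : HeightOneSpectrum R, (v.asIdeal : FractionalIdeal R⁰ K) ^ e v) :=
    (isUnit_pow_iff (NeZero.ne n)).mp (hpow ▸ I.isUnit)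
  exact ⟨hunit.unit, Units.ext hpow⟩

theorem exists_pow_eq_toPrincipalIdeal {n : ℕ} [NeZero n] {x : Kˣ}
    (hx : (QuotientGroup.mk x : Kˣ ⧸ (powMonoidHom n : Kˣ →* Kˣ).range) ∈
      selmerGroup (R := R) (K := K) (S := ∅) (n := n)) :
    ∃ J : (FractionalIdeal R⁰ K)ˣ, J ^ n = toPrincipalIdeal R K x := by
  refine exists_pow_eq_of_forall_dvd_count n fun v ↦ ?_
  rw [coe_toPrincipalIdeal, count_spanSingleton, dvd_neg, ← valuationOfNeZeroMod_mk_eq_one_iff]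
  exact hx v (Set.notMem_empty v)

theorem exists_mk_inv_mul_eq_fromUnit {n : ℕ} {x y : Kˣ} {I J : (FractionalIdeal R⁰ K)ˣ}
    (hI : I ^ n = toPrincipalIdeal R K x) (hJ : J ^ n = toPrincipalIdeal R K y)
    (hIJ : (QuotientGroup.mk I : (FractionalIdeal R⁰ K)ˣ ⧸ (toPrincipalIdeal R K).range) =
      QuotientGroup.mk J) :
    ∃ u : Rˣ, selmerGroup.fromUnit (K := K) (n := n) u =
      (QuotientGroup.mk (x⁻¹ * y) : Kˣ ⧸ (powMonoidHom n : Kˣ →* Kˣ).range) := by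
  obtain ⟨z, hz⟩ := QuotientGroup.eq.mp hIJ
  have hprincipal : toPrincipalIdeal R K (x * z ^ n) = toPrincipalIdeal R K y := by
    rw [map_mul, map_pow, hz, ← hI, ← hJ, mul_pow, inv_pow, mul_inv_cancel_left]
  obtain ⟨u, hu⟩ : ∃ u : Rˣ, u • ((x * z ^ n : Kˣ) : K) = y := by
    rw [← FractionalIdeal.spanSingleton_eq_spanSingleton (S := R⁰), ← coe_toPrincipalIdeal,
      ← coe_toPrincipalIdeal, hprincipal]
  refine ⟨u, QuotientGroup.eq.mpr ⟨z, ?_⟩⟩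
  have hy : y = Units.map (algebraMap R K).toMonoidHom u * (x * z ^ n) :=
    Units.ext (hu.symm.trans (Algebra.smul_def (u : R) _))
  rw [hy, powMonoidHom_apply, mul_left_comm _ x, inv_mul_cancel_left, inv_mul_cancel_left]

theorem finite_range_fromUnit [Group.FG Rˣ] (n : ℕ) [NeZero n] :
    Finite (selmerGroup.fromUnit (R := R) (K := K) (n := n)).range := by
  have := Group.fg_range (selmerGroup.fromUnit (R := R) (K := K) (n := n))
  refine CommGroup.finite_of_fg_isMulTorsion _ ?_
  rintro ⟨_, u, rfl⟩
  refine isOfFinOrder_iff_pow_eq_one.mpr ⟨n, NeZero.pos n, Subtype.ext (Subtype.ext ?_)⟩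
  exact (QuotientGroup.eq_one_iff _).mpr ⟨Units.map (algebraMap R K).toMonoidHom u, rfl⟩

theorem finite_selmerGroup_empty [Group.FG Rˣ] [Finite (ClassGroup R)] (n : ℕ) [NeZero n] :
    Finite (selmerGroup (R := R) (K := K) (S := ∅) (n := n)) := by
  choose c hc using fun x : selmerGroup (R := R) (K := K) (S := ∅) (n := n) ↦
    exists_pow_eq_toPrincipalIdeal (x := x.1.out) ((QuotientGroup.out_eq' x.1).symm ▸ x.2)
  have := finite_range_fromUnit (R := R) (K := K) n
  have := Finite.of_equiv _ (ClassGroup.equiv (R := R) K).toEquiv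
  suffices Finite (_ ⧸ (selmerGroup.fromUnit (R := R) (K := K) (n := n)).range) from
    Finite.of_subgroup_quotient (selmerGroup.fromUnit (R := R) (K := K) (n := n)).range
  refine Finite.of_injective (fun q ↦ (QuotientGroup.mk (c q.out) :
    (FractionalIdeal R⁰ K)ˣ ⧸ (toPrincipalIdeal R K).range)) fun q r hqr ↦ ?_
  obtain ⟨u, hu⟩ := exists_mk_inv_mul_eq_fromUnit (hc q.out) (hc r.out) hqr
  rw [← q.out_eq', ← r.out_eq', QuotientGroup.eq]
  refine ⟨u, Subtype.ext (hu.trans ?_)⟩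
  rw [QuotientGroup.mk_mul, QuotientGroup.mk_inv, QuotientGroup.out_eq', QuotientGroup.out_eq']
  rfl

theorem finite_selmerGroup [Group.FG Rˣ] [Finite (ClassGroup R)] {S : Set (HeightOneSpectrum R)}
    (hS : S.Finite) (n : ℕ) [NeZero n] :
    Finite (selmerGroup (R := R) (K := K) (S := S) (n := n)) := by
  have := hS.to_subtype
  have := finite_selmerGroup_empty (R := R) (K := K) n
  refine (MonoidHom.finite_iff_finite_ker_range selmerGroup.valuation).mpr ⟨?_, inferInstance⟩
  rw [selmerGroup.valuation_ker_eq]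
  exact (Subgroup.subgroupOfEquivOfLe (selmerGroup.monotone S.empty_subset)).finite_iff.mpr this

theorem dvd_toAdd_valuationOfNeZero_of_valuation_eq_pow {v : HeightOneSpectrum R} {n : ℕ}
    [NeZero n] {x : Kˣ} {g : ℤᵐ⁰} (h : v.valuation K x = g ^ n) :
    (n : ℤ) ∣ (v.valuationOfNeZero x).toAdd := by
  have hg : g ≠ 0 := by
    rintro rfl
    rw [zero_pow (NeZero.ne n), Valuation.zero_iff] at h
    exact x.ne_zero h
  lift g to Multiplicative ℤ using hg
  rw [← HeightOneSpectrum.valuationOfNeZero_eq, ← WithZero.coe_pow, WithZero.coe_inj] at h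
  rw [h, toAdd_pow, nsmul_eq_mul]
  exact dvd_mul_right _ _

variable (K) in
theorem exists_finite_forall_eq_mul_pow [Group.FG Rˣ] [Finite (ClassGroup R)]
    {S : Set (HeightOneSpectrum R)} (hS : S.Finite) (n : ℕ) [NeZero n] :
    ∃ A : Set K, A.Finite ∧ ∀ x : K, x ≠ 0 →
      (∀ v ∉ S, ∃ g, v.valuation K x = g ^ n) → ∃ a ∈ A, ∃ z, x = a * z ^ n := by
  have := finite_selmerGroup (R := R) (K := K) hS n
  refine ⟨Set.range fun y : selmerGroup (R := R) (K := K) (S := S) (n := n) ↦ (y.1.out : K),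
    Set.finite_range _, fun x hx0 hx ↦ ?_⟩
  lift x to Kˣ using hx0.isUnit
  have hmem : (QuotientGroup.mk x : Kˣ ⧸ (powMonoidHom n : Kˣ →* Kˣ).range) ∈
      selmerGroup (R := R) (K := K) (S := S) (n := n) := fun v hv ↦
    (valuationOfNeZeroMod_mk_eq_one_iff v n x).mpr <|
      (hx v hv).elim fun _ ↦ dvd_toAdd_valuationOfNeZero_of_valuation_eq_pow
  refine ⟨_, ⟨⟨_, hmem⟩, rfl⟩, ?_⟩
  obtain ⟨z, hz⟩ := QuotientGroup.eq.mp (QuotientGroup.out_eq' (QuotientGroup.mk x :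
    Kˣ ⧸ (powMonoidHom n : Kˣ →* Kˣ).range))
  exact ⟨z, congrArg Units.val (eq_mul_of_inv_mul_eq hz.symm)⟩

end SelmerGroup

section SIntegers

variable {R K : Type*} [CommRing R] [IsDedekindDomain R] [Field K] [Algebra R K]
  [IsFractionRing R K] {S T : Set (HeightOneSpectrum R)}

theorem integer_subset_integer (h : S ⊆ T) : (S.integer K : Set K) ⊆ T.integer K :=
  fun _ hx v hv ↦ hx v fun hvS ↦ hv (h hvS)

theorem mem_integer_of_sq_mem {x : K} (hx : x ^ 2 ∈ S.integer K) : x ∈ S.integer K := by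
  intro v hv
  rw [← pow_le_one_iff two_ne_zero, ← map_pow]
  exact hx v hv

theorem mem_integer_of_forall_valuation_eq_one {x : K}
    (hx : x ≠ 0 → ∀ v ∉ S, v.valuation K x = 1) : x ∈ S.integer K := by
  rcases eq_or_ne x 0 with rfl | h
  · exact zero_mem _
  · exact fun v hv ↦ (hx h v hv).le

theorem exists_mem_unit_of_mul_eq {x y z : K} (hx : x ∈ S.integer K) (hy : y ∈ S.integer K)
    (hz : ∀ v ∉ S, v.valuation K z = 1) (hz0 : z ≠ 0) (h : x * y = z) :
    ∃ u ∈ S.unit K, (u : K) = x := by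
  subst h
  refine ⟨Units.mk0 x (left_ne_zero_of_mul hz0), fun v hv ↦ (hx v hv).antisymm ?_, rfl⟩
  have := hz v hv
  rw [map_mul] at this
  by_contra! hlt
  exact (mul_lt_one_of_lt_of_le hlt (hy v hv)).ne this

variable (K) in
theorem exists_finite_superset_forall_valuation_eq_one (hS : S.Finite) {E : Set K}
    (hE : E.Finite) : ∃ T : Set (HeightOneSpectrum R), T.Finite ∧ S ⊆ T ∧
      ∀ x ∈ E, x ≠ 0 → ∀ v ∉ T, v.valuation K x = 1 := by
  refine ⟨S ∪ ⋃ x ∈ E ∪ E⁻¹, HeightOneSpectrum.Support R x,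
    hS.union ((hE.union hE.inv).biUnion fun x _ ↦ HeightOneSpectrum.Support.finite R x),
    Set.subset_union_left, fun x hx hx0 v hv ↦ ?_⟩
  have hle : ∀ y ∈ E ∪ E⁻¹, v.valuation K y ≤ 1 := fun y hy ↦
    not_lt.mp fun hlt ↦ hv (Or.inr (Set.mem_biUnion hy hlt))
  refine (hle x (Or.inl hx)).antisymm ?_
  have hinv := hle x⁻¹ (Or.inr (Set.inv_mem_inv.mpr hx))
  rwa [map_inv₀, inv_le_one₀ (zero_lt_iff.mpr ((Valuation.ne_zero_iff _).mpr hx0))] at hinv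

end SIntegers

section Extension

open HeightOneSpectrum

variable {A B K L : Type*} [CommRing A] [IsDedekindDomain A] [CommRing B] [IsDedekindDomain B]
  [Algebra A B] [Module.IsTorsionFree A B] [Algebra.IsIntegral A B] [Field K] [Field L]
  [Algebra K L] [Algebra A K] [IsFractionRing A K] [Algebra A L] [IsScalarTower A K L]
  [Algebra B L] [IsFractionRing B L] [IsScalarTower A B L]

theorem algebraMap_mem_integer_preimage_under {S : Set (HeightOneSpectrum A)} {x : K}
    (hx : x ∈ S.integer K) :
    algebraMap K L x ∈ ((under A : HeightOneSpectrum B → _) ⁻¹' S).integer L := by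
  intro w hw
  have : w.asIdeal.LiesOver (w.under A).asIdeal := ⟨rfl⟩
  rw [← valuation_liesOver L (w.under A) w]
  exact pow_le_one₀ zero_le (hx _ hw)

variable (B) in
theorem finite_preimage_under {S : Set (HeightOneSpectrum A)} (hS : S.Finite) :
    ((under A : HeightOneSpectrum B → _) ⁻¹' S).Finite := by
  refine hS.preimage' fun v _ ↦ ?_
  refine ((IsDedekindDomain.primesOver_finite v.asIdeal B).preimage
    (f := asIdeal) fun _ _ _ _ h ↦ HeightOneSpectrum.ext h).subset ?_
  rintro w rfl
  exact ⟨w.isPrime, ⟨rfl⟩⟩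

end Extension

section ThreeSquares

variable {K : Type*} [Field K] [NumberField K] {S : Set (HeightOneSpectrum (𝓞 K))} {a b c : K}

theorem exists_unitEquationSolutions_of_isSquare_sub (ha : a ∈ S.integer K)
    (hb : b ∈ S.integer K) (hc : c ∈ S.integer K) (hab : a ≠ b) (hac : a ≠ c) (hbc : b ≠ c)
    (hvab : ∀ v ∉ S, v.valuation K (b - a) = 1) (hvac : ∀ v ∉ S, v.valuation K (c - a) = 1)
    (hvbc : ∀ v ∉ S, v.valuation K (c - b) = 1) {X : K} (hX : X ∈ S.integer K)
    (hXa : IsSquare (X - a)) (hXb : IsSquare (X - b)) (hXc : IsSquare (X - c)) :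
    ∃ p ∈ unitEquationSolutions S, ∃ q ∈ unitEquationSolutions S,
      X = a + (p.1 + q.1) ^ 2 * (b - a) / (4 * p.1 * q.1) := by
  obtain ⟨x, hx⟩ := isSquare_iff_exists_sq _ |>.mp hXa
  obtain ⟨y, hy⟩ := isSquare_iff_exists_sq _ |>.mp hXb
  obtain ⟨z, hz⟩ := isSquare_iff_exists_sq _ |>.mp hXc
  have hxS := mem_integer_of_sq_mem (hx ▸ sub_mem hX ha)
  have hyS := mem_integer_of_sq_mem (hy ▸ sub_mem hX hb)
  have hzS := mem_integer_of_sq_mem (hz ▸ sub_mem hX hc)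
  have hba := sub_ne_zero.mpr hab.symm
  have hca := sub_ne_zero.mpr hac.symm
  have hcb := sub_ne_zero.mpr hbc.symm
  obtain ⟨u₁, hu₁, h₁⟩ := exists_mem_unit_of_mul_eq (sub_mem hxS hyS) (add_mem hxS hyS) hvab hba
    (by linear_combination hy - hx)
  obtain ⟨u₂, hu₂, h₂⟩ := exists_mem_unit_of_mul_eq (add_mem hxS hyS) (sub_mem hxS hyS) hvab hba
    (by linear_combination hy - hx)
  obtain ⟨u₃, hu₃, h₃⟩ := exists_mem_unit_of_mul_eq (sub_mem hxS hzS) (add_mem hxS hzS) hvac hca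
    (by linear_combination hz - hx)
  obtain ⟨u₄, hu₄, h₄⟩ := exists_mem_unit_of_mul_eq (sub_mem hyS hzS) (add_mem hyS hzS) hvbc hcb
    (by linear_combination hz - hy)
  obtain ⟨u₅, hu₅, h₅⟩ := exists_mem_unit_of_mul_eq (neg_mem (add_mem hyS hzS))
    (sub_mem hzS hyS) hvbc hcb (by linear_combination hz - hy)
  refine ⟨(u₁ / u₃, u₄ / u₃), ⟨div_mem hu₁ hu₃, div_mem hu₄ hu₃, ?_⟩,
    (u₂ / u₃, u₅ / u₃), ⟨div_mem hu₂ hu₃, div_mem hu₅ hu₃, ?_⟩, ?_⟩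
  · rw [Units.val_div_eq_div_val, Units.val_div_eq_div_val, ← add_div,
      div_eq_one_iff_eq u₃.ne_zero, h₁, h₃, h₄]
    ring
  · rw [Units.val_div_eq_div_val, Units.val_div_eq_div_val, ← add_div,
      div_eq_one_iff_eq u₃.ne_zero, h₂, h₃, h₅]
    ring
  · have hsum : (u₁ + u₂ : K) = 2 * x := by rw [h₁, h₂]; ring
    have hprod : (u₁ * u₂ : K) = b - a := by rw [h₁, h₂]; linear_combination hy - hx
    have hX : X = a + (u₁ + u₂ : K) ^ 2 / 4 := by
      rw [hsum, mul_pow]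
      linear_combination hx
    rw [Units.val_div_eq_div_val, Units.val_div_eq_div_val, ← hprod, hX]
    field_simp

theorem finite_setOf_three_isSquare_sub (hS : S.Finite) (hab : a ≠ b) (hac : a ≠ c)
    (hbc : b ≠ c) :
    {X ∈ S.integer K | IsSquare (X - a) ∧ IsSquare (X - b) ∧ IsSquare (X - c)}.Finite := by
  obtain ⟨T, hT, hST, hval⟩ := exists_finite_superset_forall_valuation_eq_one K hS
    (E := {a, b, c, b - a, c - a, c - b}) (Set.toFinite _)
  have hmem : ∀ x ∈ ({a, b, c, b - a, c - a, c - b} : Set K), x ∈ T.integer K :=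
    fun x hx ↦ mem_integer_of_forall_valuation_eq_one (hval x hx)
  refine (((finite_unitEquationSolutions hT).prod (finite_unitEquationSolutions hT)).image
    fun r ↦ a + (r.1.1 + r.2.1 : K) ^ 2 * (b - a) / (4 * r.1.1 * r.2.1)).subset ?_
  rintro X ⟨hX, hXa, hXb, hXc⟩
  obtain ⟨p, hp, q, hq, rfl⟩ := exists_unitEquationSolutions_of_isSquare_sub
    (hmem a (by simp)) (hmem b (by simp)) (hmem c (by simp)) hab hac hbc
    (hval _ (by simp) (sub_ne_zero.mpr hab.symm)) (hval _ (by simp) (sub_ne_zero.mpr hac.symm))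
    (hval _ (by simp) (sub_ne_zero.mpr hbc.symm)) (integer_subset_integer hST hX) hXa hXb hXc
  exact ⟨(p, q), ⟨hp, hq⟩, rfl⟩

end ThreeSquares

section ProductOfLinearFactors

theorem isSquare_valuation_sub_of_isSquare_mul_prod {K Γ₀ : Type*} [Field K]
    [LinearOrderedCommGroupWithZero Γ₀] (v : Valuation K Γ₀) {R : Finset K} {c α X : K}
    (hc : v c = 1) (hα : α ∈ R) (hv : ∀ β ∈ R, β ≠ α → v (α - β) = 1) (hX : v (X - α) ≤ 1)
    (h : IsSquare (c * ∏ β ∈ R, (X - β))) : IsSquare (v (X - α)) := by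
  classical
  rcases hX.lt_or_eq with hlt | heq
  · have hother : ∀ β ∈ R.erase α, v (X - β) = 1 := fun β hβ ↦ by
      have hβ1 := hv β (Finset.mem_of_mem_erase hβ) (Finset.ne_of_mem_erase hβ)
      rw [← sub_add_sub_cancel X α β, v.map_add_eq_of_lt_right (hβ1.symm ▸ hlt), hβ1]
    simpa only [map_mul, map_prod, hc, one_mul, ← Finset.mul_prod_erase _ _ hα,
      Finset.prod_eq_one hother, mul_one] using h.map v
  · exact heq ▸ IsSquare.one

universe u

open Polynomial in
theorem exists_finiteDimensional_forall_isSquare {K : Type u} [Field K] {A : Set K}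
    (hA : A.Finite) : ∃ (L : Type u) (_ : Field L) (_ : Algebra K L), FiniteDimensional K L ∧
      ∀ a ∈ A, IsSquare (algebraMap K L a) := by
  obtain ⟨p, hp0, hp⟩ : ∃ p : K[X], p ≠ 0 ∧ ∀ a ∈ A, X ^ 2 - C a ∣ p :=
    ⟨∏ a ∈ hA.toFinset, (X ^ 2 - C a),
      Finset.prod_ne_zero_iff.mpr fun a _ ↦ X_pow_sub_C_ne_zero two_pos a,
      fun a ha ↦ Finset.dvd_prod_of_mem _ (hA.mem_toFinset.mpr ha)⟩
  refine ⟨p.SplittingField, inferInstance, inferInstance, inferInstance, fun a ha ↦ ?_⟩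
  have hsplit := (SplittingField.splits p).of_dvd (map_ne_zero hp0)
    (map_dvd (algebraMap K p.SplittingField) (hp a ha))
  obtain ⟨w, hw⟩ := hsplit.exists_eval_eq_zero (by
    rw [degree_map, degree_X_pow_sub_C two_pos]
    exact two_ne_zero)
  refine (isSquare_iff_exists_sq _).mpr ⟨w, Eq.symm ?_⟩
  simpa [sub_eq_zero] using hw

variable {K : Type u} [Field K] [NumberField K] {S : Set (HeightOneSpectrum (𝓞 K))}

theorem exists_finite_forall_sub_eq_mul_sq (hS : S.Finite) {c : K} (hc : c ≠ 0)
    (R : Finset K) :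
    ∃ A : Set K, A.Finite ∧ ∀ X ∈ S.integer K, IsSquare (c * ∏ β ∈ R, (X - β)) →
      ∀ α ∈ R, X ≠ α → ∃ a ∈ A, ∃ z, X - α = a * z ^ 2 := by
  obtain ⟨T, hT, hST, hval⟩ := exists_finite_superset_forall_valuation_eq_one K hS
    (E := insert c (R ∪ Set.image2 (· - ·) R R)) ((R.finite_toSet.union
      (R.finite_toSet.image2 _ R.finite_toSet)).insert c)
  have : Group.FG (𝓞 K)ˣ := Group.fg_iff_monoid_fg.mpr inferInstance
  obtain ⟨A, hA, hmul⟩ := exists_finite_forall_eq_mul_pow K hT 2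
  refine ⟨A, hA, fun X hX hsq α hα hXα ↦ hmul _ (sub_ne_zero.mpr hXα) fun v hv ↦ ?_⟩
  have hαT : α ∈ T.integer K :=
    mem_integer_of_forall_valuation_eq_one (hval α (Or.inr (Or.inl hα)))
  refine (isSquare_iff_exists_sq _).mp (isSquare_valuation_sub_of_isSquare_mul_prod _
    (hval c (Or.inl rfl) hc v hv) hα (fun β hβ hβα ↦ ?_)
    (sub_mem (integer_subset_integer hST hX) hαT v hv) hsq)
  exact hval _ (Or.inr (Or.inr ⟨α, hα, β, hβ, rfl⟩)) (sub_ne_zero.mpr hβα.symm) v hv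

theorem finite_setOf_isSquare_mul_prod_sub (hS : S.Finite) {c : K} (hc : c ≠ 0)
    {R : Finset K} (hR : 2 < R.card) :
    {X ∈ S.integer K | IsSquare (c * ∏ α ∈ R, (X - α))}.Finite := by
  obtain ⟨A, hA, hsub⟩ := exists_finite_forall_sub_eq_mul_sq hS hc R
  obtain ⟨L, _, _, _, hsq⟩ := exists_finiteDimensional_forall_isSquare hA
  have := NumberField.of_module_finite K L
  obtain ⟨α, β, γ, hα, hβ, hγ, hαβ, hαγ, hβγ⟩ := Finset.two_lt_card_iff.mp hR
  have hinj := (algebraMap K L).injective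
  refine (R.finite_toSet.union ((finite_setOf_three_isSquare_sub
    (finite_preimage_under (𝓞 L) hS) (hinj.ne hαβ) (hinj.ne hαγ) (hinj.ne hβγ)).preimage
      hinj.injOn)).subset ?_
  rintro X ⟨hX, hXsq⟩
  refine or_iff_not_imp_left.mpr fun hXR ↦ ?_
  have hsquare : ∀ δ ∈ R, IsSquare (algebraMap K L X - algebraMap K L δ) := fun δ hδ ↦ by
    obtain ⟨a, ha, z, hz⟩ := hsub X hX hXsq δ hδ (ne_of_mem_of_not_mem hδ hXR).symm
    rw [← map_sub, hz, map_mul, map_pow]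
    exact (hsq a ha).mul (IsSquare.sq _)
  exact ⟨algebraMap_mem_integer_preimage_under hX, hsquare α hα, hsquare β hβ, hsquare γ hγ⟩

end ProductOfLinearFactors

section SquareValues

open Polynomial

theorem exists_finset_card_eq_natDegree_and_algebraMap_eval_eq_prod {K : Type*} (L : Type*)
    [Field K] [Field L] [Algebra K L] {f : K[X]} (hf : f.Separable)
    (hsplit : (f.map (algebraMap K L)).Splits) : ∃ R : Finset L, R.card = f.natDegree ∧
      ∀ x, algebraMap K L (f.eval x) =
        algebraMap K L f.leadingCoeff * ∏ α ∈ R, (algebraMap K L x - α) := by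
  classical
  have hnodup := nodup_roots (hf.map (f := algebraMap K L))
  refine ⟨(f.map (algebraMap K L)).roots.toFinset, ?_, fun x ↦ ?_⟩
  · rw [Multiset.toFinset_card_of_nodup hnodup, ← hsplit.natDegree_eq_card_roots, natDegree_map]
  · rw [← eval_map_apply, hsplit.eval_eq_prod_roots, leadingCoeff_map,
      Finset.prod_eq_multiset_prod, Multiset.toFinset_val, hnodup.dedup]

variable {K : Type*} [Field K] [NumberField K] {S : Set (HeightOneSpectrum (𝓞 K))}

theorem finite_setOf_isSquare_eval (hS : S.Finite) {f : K[X]} (hf : Squarefree f)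
    (hdeg : 3 ≤ f.natDegree) : {x ∈ S.integer K | IsSquare (f.eval x)}.Finite := by
  obtain ⟨R, hR, heval⟩ := exists_finset_card_eq_natDegree_and_algebraMap_eval_eq_prod
    f.SplittingField (PerfectField.separable_iff_squarefree.mpr hf) (SplittingField.splits f)
  have := NumberField.of_module_finite K f.SplittingField
  have hlead := (map_ne_zero (algebraMap K f.SplittingField)).mpr
    (leadingCoeff_ne_zero.mpr hf.ne_zero)
  refine ((finite_setOf_isSquare_mul_prod_sub (finite_preimage_under (𝓞 f.SplittingField) hS)
    hlead (R := R) (by omega)).preimage (algebraMap K f.SplittingField).injective.injOn).subset ?_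
  exact fun x hx ↦ ⟨algebraMap_mem_integer_preimage_under hx.1, heval x ▸ hx.2.map _⟩

end SquareValues

end MahlerSiegel

theorem mahler_siegel_general (K : Type*) [Field K] [NumberField K]
    (S : Set (HeightOneSpectrum (𝓞 K))) (hS : S.Finite)
    (f : Polynomial K) (hf : Squarefree f) (hdeg : 3 ≤ f.natDegree) :
    {p : K × K | p.1 ∈ S.integer K ∧ p.2 ^ 2 = f.eval p.1}.Finite := by
  classical
  refine ((MahlerSiegel.finite_setOf_isSquare_eval hS hf hdeg).biUnion fun x _ ↦
    ((Polynomial.nthRoots 2 (f.eval x)).toFinset.finite_toSet.image (Prod.mk x))).subset ?_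
  rintro ⟨x, y⟩ ⟨hx, hxy⟩
  refine Set.mem_biUnion (x := x) ⟨hx, (isSquare_iff_exists_sq _).mpr ⟨y, hxy.symm⟩⟩ ⟨y, ?_, rfl⟩
  simpa [Polynomial.mem_nthRoots two_pos] using hxy

/-- Mahler's generalization of Siegel's theorem: for a number field `K`, a finite set `S` of
maximal ideals of its ring of integers, and a squarefree polynomial `f` over `K` of degree at
least 3, the set of pairs of `S`-integers `(x, y)` with `y² = f(x)` is finite. -/
theorem mahler_siegel (K : Type*) [Field K] [NumberField K]
    (S : Set (HeightOneSpectrum (𝓞 K))) (hS : S.Finite)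
    (f : Polynomial K) (hf : Squarefree f) (hdeg : 3 ≤ f.natDegree) :
    {p : K × K | p.1 ∈ S.integer K ∧ p.2 ∈ S.integer K ∧ p.2 ^ 2 = f.eval p.1}.Finite :=
  (mahler_siegel_general K S hS f hf hdeg).subset fun _ hp ↦ ⟨hp.1, hp.2.2⟩
end

section
/- The S-unit equation: let K be a number field and let S be a finite set of maximal ideals of the ring of integers of K. Then the equation x + y = 1 has only finitely many solutions (x, y) with both x and y S-units of K. -/
open IsDedekindDomain NumberField

/-!
Suppose `(x, y)` and `(X, Y)` are two solutions. With `a = X / x ^ (2 * N)` and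
`b = Y / y ^ (2 * N)` the powers of `x` and `y` satisfy `a * x ^ (2 * N) + b * y ^ (2 * N) = 1`.
Explicit integral polynomials in `x` of degree at most `N` give a second linear relation
`A * x ^ (2 * N) + B * y ^ (2 * N) = C`, independent of the first for one of two choices. Solving
the system by Cramer's rule at every place, and bounding its determinant, a nonzero `S`-integer,
from below by the product formula, yields `N * h(x, y) ≤ h(a, b) + O(N)` for the logarithmic
height `h(x, y)` of `(x : y : 1)`.

On `S`-units this height is comparable to the norm of the vector `L(x, y)` of logarithmic absolute
values, so that `N * ‖L(x, y)‖ ≤ t * ‖L(X, Y) - 2 * N * L(x, y)‖ + O(N)`. Hence two vectors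
pointing in nearly the same direction cannot have very different lengths. By Northcott's theorem
infinitely many solutions would have unbounded vectors, and compactness of the unit sphere would
produce such a pair.
-/

section PadeApproximants

open Finset Polynomial

/-- The coefficients of the binomial expansion of `(1 - X) ^ M` twisted by the polynomial
`k ↦ (k - r).choose n` of degree `n`. The twist costs `n` in the order of vanishing at `X = 1`, and
it annihilates the `n` consecutive coefficients of index `r ≤ k < r + n`. -/
def padeCoeff (M n r k : ℕ) : ℤ :=
  (-1) ^ k * M.choose k * Ring.choose ((k : ℤ) - r) n

/-- The coefficients of `padeB` in terms of the products `X ^ i * (1 - X) ^ (n - i)`. -/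
def padeBCoeff (M n r i : ℕ) : ℤ :=
  (-1) ^ i * M.choose i * Ring.choose (-(r : ℤ)) (n - i)

/-- The polynomial `A`, of degree at most `a`, of the Padé type approximation
`A * X ^ (b + c) + B * (1 - X) ^ (a + c) = C`. It collects the top part of the twisted binomial
expansion with coefficients `padeCoeff (a + b + c) b r`; only `r = c` and `r = c + 1` matter. -/
noncomputable def padeA (a b c r : ℕ) : ℤ[X] :=
  ∑ k ∈ range (a + 1), C (-padeCoeff (a + b + c) b r (b + c + k)) * X ^ k

/-- The polynomial `B`, of degree at most `b`, of the same approximation as `padeA`: the cofactor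
of `(1 - X) ^ (a + c)` in the twisted binomial expansion. -/
noncomputable def padeB (a b c r : ℕ) : ℤ[X] :=
  ∑ i ∈ range (b + 1), C (padeBCoeff (a + b + c) b r i) * (X ^ i * (1 - X) ^ (b - i))

/-- The polynomial `C`, of degree at most `c`, of the same approximation as `padeA`: the bottom part
of the twisted binomial expansion. -/
noncomputable def padeC (a b c r : ℕ) : ℤ[X] :=
  ∑ k ∈ range (c + 1), C (padeCoeff (a + b + c) b r k) * X ^ k

lemma padeCoeff_eq_zero {M n r k : ℕ} (hrk : r ≤ k) (hkr : k < r + n) : padeCoeff M n r k = 0 := by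
  rw [padeCoeff, ← Nat.cast_sub hrk, Ring.choose_natCast,
    Nat.choose_eq_zero_of_lt (show k - r < n by omega), Nat.cast_zero, mul_zero]

lemma padeCoeff_eq_sum (M n r k : ℕ) :
    padeCoeff M n r k = ∑ i ∈ range (n + 1),
      Ring.choose (-(r : ℤ)) (n - i) * ((-1) ^ k * M.choose k * k.choose i) := by
  rw [padeCoeff, sub_eq_add_neg, Ring.add_choose_eq _ (Commute.all _ _),
    Finset.Nat.sum_antidiagonal_eq_sum_range_succ
      (fun i j ↦ Ring.choose (k : ℤ) i * Ring.choose (-(r : ℤ)) j), mul_sum]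
  refine sum_congr rfl fun i _ ↦ ?_
  rw [Ring.choose_natCast]
  ring

lemma sum_choose_mul_choose_mul_X_pow {M i : ℕ} (hi : i ≤ M) :
    ∑ k ∈ range (M + 1), C ((-1) ^ k * M.choose k * k.choose i : ℤ) * X ^ k =
      C ((-1) ^ i * M.choose i : ℤ) * (X ^ i * (1 - X) ^ (M - i)) := by
  obtain ⟨d, rfl⟩ := Nat.exists_eq_add_of_le hi
  have hlow : ∑ k ∈ range i,
      C ((-1) ^ k * (i + d).choose k * k.choose i : ℤ) * X ^ k = 0 :=
    sum_eq_zero fun k hk ↦ by rw [Nat.choose_eq_zero_of_lt (mem_range.mp hk)]; simp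
  have hchoose (k : ℕ) : (((i + d).choose (i + k) : ℤ[X]) * (i + k).choose i) =
      (i + d).choose i * d.choose k := by
    have h := Nat.choose_mul (n := i + d) (k := i + k) (s := i) (by omega)
    rw [Nat.add_sub_cancel_left, Nat.add_sub_cancel_left] at h
    exact_mod_cast h
  rw [add_assoc, sum_range_add, hlow, zero_add, Nat.add_sub_cancel_left,
    show (1 - X : ℤ[X]) = -X + 1 by ring, add_pow, mul_sum, mul_sum]
  refine sum_congr rfl fun k _ ↦ ?_
  simp only [map_mul, map_pow, map_neg, map_one, map_natCast, mul_assoc, hchoose,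
    neg_pow (X : ℤ[X]), pow_add]
  ring

lemma sum_padeCoeff_mul_X_pow (a b c r : ℕ) :
    ∑ k ∈ range (a + b + c + 1), C (padeCoeff (a + b + c) b r k) * X ^ k =
      padeB a b c r * (1 - X) ^ (a + c) := by
  simp_rw [padeCoeff_eq_sum, map_sum, sum_mul, padeB]
  rw [sum_comm, sum_mul]
  refine sum_congr rfl fun i hi ↦ ?_
  have hi : i ≤ b := mem_range_succ_iff.mp hi
  simp_rw [C_mul (a := Ring.choose (-(r : ℤ)) (b - i)), mul_assoc (C _)]
  rw [← mul_sum, sum_choose_mul_choose_mul_X_pow (by omega), padeBCoeff,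
    show a + b + c - i = (b - i) + (a + c) by omega, pow_add, C_mul (b := Ring.choose _ _)]
  ring

theorem padeA_mul_add_padeB_mul {a b c r : ℕ} (hb : 1 ≤ b) (hcr : c ≤ r) (hrc : r ≤ c + 1) :
    padeA a b c r * X ^ (b + c) + padeB a b c r * (1 - X) ^ (a + c) = padeC a b c r := by
  have hgap : ∑ k ∈ range (b - 1),
      C (padeCoeff (a + b + c) b r (c + 1 + k)) * X ^ (c + 1 + k) = 0 := by
    refine sum_eq_zero fun k hk ↦ ?_
    have := mem_range.mp hk
    rw [padeCoeff_eq_zero (by omega) (by omega), map_zero, zero_mul]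
  rw [← sum_padeCoeff_mul_X_pow, show a + b + c + 1 = (c + 1) + (b - 1) + (a + 1) by omega,
    sum_range_add, sum_range_add, hgap, show c + 1 + (b - 1) = b + c by omega, padeA, padeC]
  simp only [map_neg, neg_mul, sum_neg_distrib, sum_mul, pow_add _ (b + c), mul_assoc,
    mul_comm (X ^ (b + c) : ℤ[X])]
  ring

lemma natDegree_sum_C_mul_X_pow_le {R : Type*} [Semiring R] (n : ℕ) (s : ℕ → R) :
    (∑ k ∈ range (n + 1), C (s k) * X ^ k).natDegree ≤ n :=
  natDegree_sum_le_of_forall_le _ _ fun k hk ↦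
    (natDegree_C_mul_X_pow_le _ k).trans (mem_range_succ_iff.mp hk)

lemma eval_zero_sum_C_mul_X_pow {R : Type*} [Semiring R] (n : ℕ) (s : ℕ → R) :
    (∑ k ∈ range (n + 1), C (s k) * X ^ k).eval 0 = s 0 := by
  rw [sum_range_succ']
  simp [eval_finsetSum]

lemma eval_zero_padeA_ne_zero (a b c : ℕ) : (padeA a b c c).eval 0 ≠ 0 := by
  have hM : (a + b + c).choose (b + c) ≠ 0 := (Nat.choose_pos (by omega)).ne'
  rw [padeA, eval_zero_sum_C_mul_X_pow, padeCoeff]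
  simp [Ring.choose_natCast, hM]

lemma eval_zero_padeA_eq_zero {a b c : ℕ} (hb : 1 ≤ b) : (padeA a b c (c + 1)).eval 0 = 0 := by
  rw [padeA, eval_zero_sum_C_mul_X_pow, padeCoeff_eq_zero (by omega) (by omega), neg_zero]

lemma eval_zero_padeC_ne_zero (a b c : ℕ) : (padeC a b c (c + 1)).eval 0 ≠ 0 := by
  have hchoose : (c + b).choose b ≠ 0 := (Nat.choose_pos (by omega)).ne'
  rw [padeC, eval_zero_sum_C_mul_X_pow, padeCoeff, Nat.cast_zero, zero_sub, Ring.choose_neg,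
    show ((c + 1 : ℕ) : ℤ) + b - 1 = (c + b : ℕ) by push_cast; ring, Ring.choose_natCast]
  simpa [Units.smul_def] using hchoose

/-- The product of the determinant with `(1 - X) ^ (a + c)` is `A' * C - A * C'`, of degree at
most `a + c`. -/
theorem exists_pade_det_eq_C (a : ℕ) {b : ℕ} (c : ℕ) (hb : 1 ≤ b) :
    ∃ d : ℤ, d ≠ 0 ∧ padeA a b c (c + 1) * padeB a b c c - padeA a b c c * padeB a b c (c + 1) =
      C d := by
  set D := padeA a b c (c + 1) * padeB a b c c - padeA a b c c * padeB a b c (c + 1) with hD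
  have hmul : (1 - X) ^ (a + c) * D =
      padeA a b c (c + 1) * padeC a b c c - padeA a b c c * padeC a b c (c + 1) := by
    rw [← padeA_mul_add_padeB_mul hb le_rfl (by omega),
      ← padeA_mul_add_padeB_mul hb (by omega) le_rfl, hD]
    ring
  have heval : D.eval 0 ≠ 0 := by
    have h := congrArg (eval 0) hmul
    simp only [eval_mul, eval_pow, eval_sub, eval_one, eval_X, sub_zero, one_pow, one_mul,
      eval_zero_padeA_eq_zero hb, zero_mul, zero_sub] at h
    rw [h]
    exact neg_ne_zero.mpr (mul_ne_zero (eval_zero_padeA_ne_zero a b c)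
      (eval_zero_padeC_ne_zero a b c))
  have hdegree : D.natDegree = 0 := by
    have hlin : (1 - X : ℤ[X]).natDegree = 1 := by
      rw [← neg_sub, natDegree_neg]
      exact natDegree_X_sub_C 1
    have hD0 : D ≠ 0 := by rintro h; simp [h] at heval
    have hle : ((1 - X) ^ (a + c) * D).natDegree ≤ a + c := by
      rw [hmul]
      refine (natDegree_sub_le _ _).trans (max_le ?_ ?_) <;>
      exact natDegree_mul_le.trans (add_le_add (natDegree_sum_C_mul_X_pow_le a _)
        (natDegree_sum_C_mul_X_pow_le c _))
    rw [natDegree_mul (pow_ne_zero _ (ne_zero_of_natDegree_gt (n := 0) (by omega))) hD0,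
      natDegree_pow, hlin] at hle
    omega
  exact ⟨D.coeff 0, by rwa [coeff_zero_eq_eval_zero], eq_C_of_natDegree_eq_zero hdegree⟩

lemma abs_ringChoose_le (z : ℤ) (n : ℕ) : |Ring.choose z n| ≤ 2 ^ (n + z.natAbs) := by
  obtain m | m := z
  · rw [Int.ofNat_eq_natCast, Ring.choose_natCast, Nat.abs_cast, Int.natAbs_natCast]
    exact_mod_cast (Nat.choose_le_two_pow m n).trans
      (Nat.pow_le_pow_right two_pos (Nat.le_add_left m n))
  · rw [Int.negSucc_eq, Ring.choose_neg, show (m + 1 : ℤ) + n - 1 = (n + m : ℕ) by push_cast; ring,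
      Ring.choose_natCast, Units.smul_def, smul_eq_mul, abs_mul,
      Int.isUnit_iff_abs_eq.mp (Units.isUnit _), one_mul, Nat.abs_cast]
    exact_mod_cast (Nat.choose_le_two_pow (n + m) n).trans
      (Nat.pow_le_pow_right two_pos (by omega))

lemma abs_choose_mul_ringChoose_le {M m n : ℕ} {z : ℤ} (k : ℕ) (hm : m ≤ n)
    (hz : z.natAbs ≤ M) :
    |(-1) ^ k * (M.choose k : ℤ) * Ring.choose z m| ≤ 2 ^ (2 * M + n) := by
  have hbinom : (M.choose k : ℤ) ≤ 2 ^ M := by exact_mod_cast Nat.choose_le_two_pow M k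
  rw [abs_mul, abs_mul, abs_pow, abs_neg, abs_one, one_pow, one_mul, Nat.abs_cast]
  calc (M.choose k : ℤ) * |Ring.choose z m|
      ≤ 2 ^ M * 2 ^ (m + z.natAbs) := by gcongr; exact abs_ringChoose_le z m
    _ = 2 ^ (M + (m + z.natAbs)) := (pow_add ..).symm
    _ ≤ 2 ^ (2 * M + n) := pow_le_pow_right₀ one_le_two (by omega)

lemma abs_padeCoeff_le {M n r k : ℕ} (hr : r ≤ M) (hk : k ≤ M) :
    |padeCoeff M n r k| ≤ 2 ^ (2 * M + n) :=
  abs_choose_mul_ringChoose_le k le_rfl (by omega)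

lemma abs_padeBCoeff_le {M n r : ℕ} (i : ℕ) (hr : r ≤ M) :
    |padeBCoeff M n r i| ≤ 2 ^ (2 * M + n) :=
  abs_choose_mul_ringChoose_le i (Nat.sub_le n i) (by omega)

end PadeApproximants

section PadeValues

open Finset Polynomial

section AbsoluteValue

variable {R : Type*} [CommRing R] (g : AbsoluteValue R ℝ)

/-- The local factor `max |x| |y| 1` at the absolute value `g` of the height of the projective point
`(x : y : 1)`. -/
def affineSup (x y : R) : ℝ :=
  max (max (g x) (g y)) 1

variable {g}

lemma one_le_affineSup (x y : R) : 1 ≤ affineSup g x y :=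
  le_max_right _ _

lemma affineSup_pos (x y : R) : 0 < affineSup g x y :=
  one_pos.trans_le (one_le_affineSup x y)

lemma le_affineSup_left (x y : R) : g x ≤ affineSup g x y :=
  (le_max_left _ _).trans (le_max_left _ _)

lemma le_affineSup_right (x y : R) : g y ≤ affineSup g x y :=
  (le_max_right _ _).trans (le_max_left _ _)

lemma affineSup_mul_le {x y : R} {d E : ℝ} (hd : 0 ≤ d) (hx : g x * d ≤ E) (hy : g y * d ≤ E)
    (h1 : d ≤ E) : affineSup g x y * d ≤ E := by
  rw [affineSup, max_mul_of_nonneg _ _ hd, max_mul_of_nonneg _ _ hd, one_mul]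
  exact max_le (max_le hx hy) h1

/-- Cramer's rule, applied to the two equations and to the determinant itself. -/
lemma affineSup_mul_apply_det_le {x y a b A B C : R} {E : ℝ} (hab : a * x + b * y = 1)
    (hAB : A * x + B * y = C) (hA : g A ≤ E) (hB : g B ≤ E) (hC : g C ≤ E) :
    affineSup g x y * g (a * B - b * A) ≤ 2 * (affineSup g a b * E) := by
  have hE : 0 ≤ E := (g.nonneg A).trans hA
  have hmul {s t : R} (hs : g s ≤ affineSup g a b) (ht : g t ≤ E) :
      g (s * t) ≤ affineSup g a b * E := by
    rw [map_mul]
    exact mul_le_mul hs ht (g.nonneg t) (affineSup_pos a b).le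
  have hone {t : R} (ht : g t ≤ E) : g t ≤ affineSup g a b * E :=
    ht.trans (le_mul_of_one_le_left hE (one_le_affineSup a b))
  have hsub {s t : R} (hs : g s ≤ affineSup g a b * E) (ht : g t ≤ affineSup g a b * E) :
      g (s - t) ≤ 2 * (affineSup g a b * E) := by
    rw [two_mul]
    exact (g.sub_le_add s t).trans (add_le_add hs ht)
  have hx : x * (a * B - b * A) = B - b * C := by linear_combination B * hab - b * hAB
  have hy : y * (a * B - b * A) = a * C - A := by linear_combination a * hAB - A * hab
  refine affineSup_mul_le (g.nonneg _) ?_ ?_ ?_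
  · rw [← map_mul, hx]
    exact hsub (hone hB) (hmul (le_affineSup_right a b) hC)
  · rw [← map_mul, hy]
    exact hsub (hmul (le_affineSup_left a b) hC) (hone hA)
  · exact hsub (hmul (le_affineSup_left a b) hB) (hmul (le_affineSup_right a b) hA)

lemma apply_intCast_le_abs (n : ℤ) : g n ≤ |n| := by
  rw [← g.apply_natAbs_eq, ← Int.natCast_natAbs, Int.cast_natCast]
  exact g.apply_nat_le_self _

lemma apply_sum_intCast_mul_le {n : ℕ} {s : ℕ → ℤ} {z : ℕ → R} {L : ℤ} {B : ℝ}
    (hs : ∀ k ≤ n, |s k| ≤ L) (hz : ∀ k ≤ n, g (z k) ≤ B) :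
    g (∑ k ∈ range (n + 1), s k * z k) ≤ (n + 1) * (L * B) := by
  refine (g.sum_le _ _).trans ((sum_le_card_nsmul _ _ (L * B) fun k hk ↦ ?_).trans_eq ?_)
  · have hk : k ≤ n := mem_range_succ_iff.mp hk
    have hsk : g (s k) ≤ L := (apply_intCast_le_abs (s k)).trans (by exact_mod_cast hs k hk)
    rw [map_mul]
    exact mul_le_mul hsk (hz k hk) (g.nonneg _) ((g.nonneg _).trans hsk)
  · rw [card_range, nsmul_eq_mul, Nat.cast_add, Nat.cast_one]

variable [Nontrivial R]

lemma affineSup_pow (x y : R) (n : ℕ) : affineSup g (x ^ n) (y ^ n) = affineSup g x y ^ n := by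
  have hmono : MonotoneOn (fun t : ℝ ↦ t ^ n) (Set.Ici 0) := pow_left_monotoneOn
  rw [affineSup, affineSup, map_pow, map_pow,
    hmono.map_max (Set.mem_Ici.mpr (le_max_of_le_left (g.nonneg x))) (Set.mem_Ici.mpr zero_le_one),
    hmono.map_max (g.nonneg x) (g.nonneg y), one_pow]

lemma apply_pow_le_pow {x : R} {H : ℝ} {k n : ℕ} (hH : 1 ≤ H) (hx : g x ≤ H) (hk : k ≤ n) :
    g (x ^ k) ≤ H ^ n := by
  rw [map_pow]
  exact (pow_le_pow_left₀ (g.nonneg _) hx k).trans (pow_le_pow_right₀ hH hk)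

lemma apply_aeval_sum_C_mul_X_pow_le {n : ℕ} {s : ℕ → ℤ} {L : ℤ} {x : R} {H : ℝ}
    (hs : ∀ k ≤ n, |s k| ≤ L) (hH : 1 ≤ H) (hx : g x ≤ H) :
    g (aeval x (∑ k ∈ range (n + 1), C (s k) * X ^ k)) ≤ (n + 1) * (L * H ^ n) := by
  simp only [map_sum, map_mul, map_pow, aeval_X, eq_intCast, map_intCast]
  exact apply_sum_intCast_mul_le hs fun k hk ↦ apply_pow_le_pow hH hx hk

variable {a b c r : ℕ} {x : R} {H : ℝ}

lemma apply_aeval_padeA_le (hr : r ≤ a + b + c) (hH : 1 ≤ H) (hx : g x ≤ H) :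
    g (aeval x (padeA a b c r)) ≤ (a + 1) * ((2 ^ (2 * (a + b + c) + b) : ℤ) * H ^ a) :=
  apply_aeval_sum_C_mul_X_pow_le
    (fun k hk ↦ (abs_neg _).trans_le (abs_padeCoeff_le hr (by omega))) hH hx

lemma apply_aeval_padeC_le (hr : r ≤ a + b + c) (hH : 1 ≤ H) (hx : g x ≤ H) :
    g (aeval x (padeC a b c r)) ≤ (c + 1) * ((2 ^ (2 * (a + b + c) + b) : ℤ) * H ^ c) :=
  apply_aeval_sum_C_mul_X_pow_le (fun k hk ↦ abs_padeCoeff_le hr (by omega)) hH hx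

lemma apply_aeval_padeB_le (hr : r ≤ a + b + c) (hH : 1 ≤ H) (hx : g x ≤ H)
    (hx' : g (1 - x) ≤ H) :
    g (aeval x (padeB a b c r)) ≤ (b + 1) * ((2 ^ (2 * (a + b + c) + b) : ℤ) * H ^ b) := by
  simp only [padeB, map_sum, map_mul, map_pow, map_sub, map_one, aeval_X,
    eq_intCast, map_intCast]
  refine apply_sum_intCast_mul_le (fun i _ ↦ abs_padeBCoeff_le i hr) fun i hi ↦ ?_
  calc g (x ^ i * (1 - x) ^ (b - i)) = g (x ^ i) * g ((1 - x) ^ (b - i)) := map_mul ..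
    _ ≤ H ^ i * H ^ (b - i) := by
      gcongr
      · exact apply_pow_le_pow hH hx le_rfl
      · exact apply_pow_le_pow hH hx' le_rfl
    _ = H ^ b := by rw [← pow_add, Nat.add_sub_cancel' hi]

lemma succ_mul_two_pow_mul_le (N : ℕ) (hH : 1 ≤ H) :
    (N + 1) * ((2 ^ (2 * (N + N + N) + N) : ℤ) * H ^ N) ≤ 256 ^ N * H ^ N := by
  have hN : (N + 1 : ℝ) ≤ 2 ^ N := by exact_mod_cast N.lt_two_pow_self
  calc (N + 1) * ((2 ^ (2 * (N + N + N) + N) : ℤ) * H ^ N)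
      ≤ 2 ^ N * ((2 ^ (2 * (N + N + N) + N) : ℤ) * H ^ N) := by gcongr
    _ = 256 ^ N * H ^ N := by
      rw [show (256 : ℝ) = 2 ^ 8 by norm_num, ← pow_mul]
      push_cast
      ring

end AbsoluteValue

variable {R : Type*} [CommRing R]

/-- The value at `(a, b)` of the integral linear form whose coefficients are the values at `x` of
the polynomials `B` and `-A` of the diagonal approximation. If `a * x ^ (2 * N)` and
`b * (1 - x) ^ (2 * N)` have sum `1`, it is the determinant of the linear system satisfied by these
two powers. -/
noncomputable def padeForm (N r : ℕ) (x a b : R) : R :=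
  a * aeval x (padeB N N N r) - b * aeval x (padeA N N N r)

lemma aeval_int_mem {O : Subring R} {x : R} (hx : x ∈ O) (p : ℤ[X]) : aeval x p ∈ O := by
  rw [aeval_eq_sum_range]
  exact sum_mem fun i _ ↦ zsmul_mem (pow_mem hx i) _

lemma padeForm_mem {O : Subring R} {x a b : R} (hx : x ∈ O) (ha : a ∈ O) (hb : b ∈ O)
    (N r : ℕ) : padeForm N r x a b ∈ O :=
  sub_mem (mul_mem ha (aeval_int_mem hx _)) (mul_mem hb (aeval_int_mem hx _))

lemma exists_padeForm_ne_zero [NoZeroDivisors R] [CharZero R] {N : ℕ} (hN : 1 ≤ N) {a : R}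
    (ha : a ≠ 0) (x b : R) : ∃ r, N ≤ r ∧ r ≤ N + 1 ∧ padeForm N r x a b ≠ 0 := by
  by_contra! hzero
  obtain ⟨d, hd, hdet⟩ := exists_pade_det_eq_C N N hN
  have hdet := congrArg (aeval x) hdet
  have h0 := hzero N le_rfl (by omega)
  have h1 := hzero (N + 1) (by omega) le_rfl
  simp only [map_sub, map_mul, eq_intCast, map_intCast] at hdet
  rw [padeForm] at h0 h1
  refine mul_ne_zero ha (Int.cast_ne_zero.mpr hd) ?_
  linear_combination (aeval x (padeA N N N (N + 1))) * h0 - (aeval x (padeA N N N N)) * h1 -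
    a * hdet

theorem affineSup_pow_mul_apply_padeForm_le [Nontrivial R] {g : AbsoluteValue R ℝ} {N r : ℕ}
    (hN : 1 ≤ N) (hNr : N ≤ r) (hrN : r ≤ N + 1) {x y a b : R} (hxy : x + y = 1)
    (hab : a * x ^ (2 * N) + b * y ^ (2 * N) = 1) :
    affineSup g x y ^ N * g (padeForm N r x a b) ≤ 512 ^ N * affineSup g a b := by
  obtain rfl : y = 1 - x := by linear_combination hxy
  set H := affineSup g x (1 - x) with hHdef
  have hH : 1 ≤ H := one_le_affineSup x (1 - x)
  have hHN : 0 < H ^ N := pow_pos (affineSup_pos x (1 - x)) N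
  have hx : g x ≤ H := le_affineSup_left x (1 - x)
  have hpade : aeval x (padeA N N N r) * x ^ (2 * N) +
      aeval x (padeB N N N r) * (1 - x) ^ (2 * N) = aeval x (padeC N N N r) := by
    simpa [two_mul] using congrArg (aeval x) (padeA_mul_add_padeB_mul (a := N) hN hNr hrN)
  have hdet : H ^ (2 * N) * g (padeForm N r x a b) ≤
      2 * (affineSup g a b * (256 ^ N * H ^ N)) := by
    rw [hHdef, ← affineSup_pow]
    exact affineSup_mul_apply_det_le hab hpade
      ((apply_aeval_padeA_le (by omega) hH hx).trans (succ_mul_two_pow_mul_le N hH))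
      ((apply_aeval_padeB_le (by omega) hH hx (le_affineSup_right x (1 - x))).trans
        (succ_mul_two_pow_mul_le N hH))
      ((apply_aeval_padeC_le (by omega) hH hx).trans (succ_mul_two_pow_mul_le N hH))
  refine le_of_mul_le_mul_left ?_ hHN
  calc H ^ N * (H ^ N * g (padeForm N r x a b))
      = H ^ (2 * N) * g (padeForm N r x a b) := by ring
    _ ≤ 2 * (affineSup g a b * (256 ^ N * H ^ N)) := hdet
    _ ≤ 2 ^ N * (affineSup g a b * (256 ^ N * H ^ N)) := by
      have := (affineSup_pos (g := g) a b).le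
      gcongr
      exact le_self_pow₀ one_le_two (by omega)
    _ = H ^ N * (512 ^ N * affineSup g a b) := by
      rw [show (512 : ℝ) = 2 * 256 by norm_num, mul_pow]
      ring

end PadeValues

section GapPrinciple

open Filter Topology NormedSpace

variable {E : Type*} [NormedAddCommGroup E] [NormedSpace ℝ E]

lemma norm_sub_two_mul_floor_smul_le {v : E} (hv : v ≠ 0) (w : E) :
    ‖w - (2 * ⌊‖w‖ / (2 * ‖v‖)⌋₊ : ℝ) • v‖ ≤ ‖w‖ * dist (normalize w) (normalize v) + 2 * ‖v‖ := by
  have hv0 : 0 < ‖v‖ := norm_pos_iff.mpr hv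
  set N := ⌊‖w‖ / (2 * ‖v‖)⌋₊
  have hfloor : N * (2 * ‖v‖) ≤ ‖w‖ :=
    (le_div_iff₀ (by positivity)).mp (Nat.floor_le (by positivity))
  have hlt : ‖w‖ < (N + 1) * (2 * ‖v‖) :=
    (div_lt_iff₀ (by positivity)).mp (Nat.lt_floor_add_one _)
  have hdecomp : w - (2 * N : ℝ) • v =
      ‖w‖ • (normalize w - normalize v) + (‖w‖ - 2 * N * ‖v‖) • normalize v := by
    conv_lhs => rw [← norm_smul_normalize w, ← norm_smul_normalize v]
    module
  calc ‖w - (2 * N : ℝ) • v‖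
      ≤ ‖w‖ * ‖normalize w - normalize v‖ + |‖w‖ - 2 * N * ‖v‖| * ‖normalize v‖ := by
        rw [hdecomp]
        refine (norm_add_le _ _).trans_eq ?_
        rw [norm_smul, norm_smul, norm_norm, Real.norm_eq_abs]
    _ ≤ ‖w‖ * dist (normalize w) (normalize v) + 2 * ‖v‖ := by
        rw [norm_normalize_eq_one_iff.mpr hv, mul_one, dist_eq_norm]
        gcongr
        rw [abs_le]
        constructor <;> linarith

variable {α : Type*} {u : α → E}

lemma exists_dist_normalize_lt [ProperSpace E] [Infinite α]
    (hu : Tendsto (fun a ↦ ‖u a‖) cofinite atTop) :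
    ∃ c : E, ∀ ε > 0, ∀ R : ℝ, ∃ a, R < ‖u a‖ ∧ dist (normalize (u a)) c < ε := by
  have hball (a : α) : normalize (u a) ∈ Metric.closedBall (0 : E) 1 := by
    rw [mem_closedBall_zero_iff]
    obtain h | h := eq_or_ne (u a) 0
    · simp [h]
    · exact (norm_normalize_eq_one_iff.mpr h).le
  obtain ⟨c, -, hc⟩ := (isCompact_closedBall (0 : E) 1).exists_mapClusterPt
    (f := cofinite) (u := fun a ↦ normalize (u a)) (tendsto_principal.mpr (.of_forall hball))
  refine ⟨c, fun ε hε R ↦ ?_⟩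
  obtain ⟨a, hdist, hnorm⟩ :=
    ((hc.frequently (Metric.ball_mem_nhds c hε)).and_eventually (hu.eventually_gt_atTop R)).exists
  exact ⟨a, hnorm, hdist⟩

lemma mul_add_mul_lt_mul {t C n ρ ρ' δ : ℝ} (ht : 0 ≤ t) (hρ : 0 < ρ) (hδ : δ ≤ 1 / (8 * (t + 1)))
    (hC : 4 * C ≤ ρ) (hρ' : 0 ≤ ρ') (hn : 8 * t + 1 < n) (hρn : ρ' ≤ (n + 1) * (2 * ρ)) :
    t * (ρ' * δ + 2 * ρ) + n * C < n * ρ := by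
  have htδ : t * δ ≤ 1 / 8 := by
    calc t * δ ≤ t * (1 / (8 * (t + 1))) := by gcongr
      _ ≤ 1 / 8 := by rw [mul_one_div, div_le_div_iff₀ (by positivity) (by norm_num)]; linarith
  have hmain : t * (ρ' * δ) ≤ n * ρ / 2 := by
    calc t * (ρ' * δ) = (t * δ) * ρ' := by ring
      _ ≤ 1 / 8 * ((n + n) * (2 * ρ)) := by
        gcongr
        exact hρn.trans (by gcongr; linarith)
      _ = n * ρ / 2 := by ring
  have hconst : n * C ≤ n * (ρ / 4) := mul_le_mul_of_nonneg_left (by linarith) (by linarith)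
  have hfloor : 8 * t * ρ < n * ρ := by gcongr; linarith
  linarith

/-- By compactness of the unit sphere some `u p` and some much longer `u q` have nearly the same
direction; with `N = ⌊‖u q‖ / (2 * ‖u p‖)⌋` the assumed inequality then fails. -/
theorem finite_of_gap_principle [ProperSpace E] {t C : ℝ} (ht : 0 ≤ t)
    (hu : Tendsto (fun a ↦ ‖u a‖) cofinite atTop)
    (hgap : ∀ p q, ∀ N : ℕ, 1 ≤ N → N * ‖u p‖ ≤ t * ‖u q - (2 * N : ℝ) • u p‖ + N * C) :
    Finite α := by
  by_contra hα
  have : Infinite α := not_finite_iff_infinite.mp hα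
  obtain ⟨c, hc⟩ := exists_dist_normalize_lt hu
  have hε : 0 < 1 / (16 * (t + 1)) := by positivity
  obtain ⟨p, hpC, hpc⟩ := hc _ hε (max (4 * C) 0)
  obtain ⟨hpC, hp⟩ := max_lt_iff.mp hpC
  obtain ⟨q, hq, hqc⟩ := hc _ hε ((8 * t + 2) * (2 * ‖u p‖))
  have hdist : dist (normalize (u q)) (normalize (u p)) ≤ 1 / (8 * (t + 1)) := by
    calc dist (normalize (u q)) (normalize (u p))
        ≤ 1 / (16 * (t + 1)) + 1 / (16 * (t + 1)) :=
          (dist_triangle_right _ _ c).trans (add_le_add hqc.le hpc.le)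
      _ = 1 / (8 * (t + 1)) := by field_simp; norm_num
  set N := ⌊‖u q‖ / (2 * ‖u p‖)⌋₊
  have hlt : ‖u q‖ / (2 * ‖u p‖) < N + 1 := Nat.lt_floor_add_one _
  have hNt : 8 * t + 1 < N := by
    linarith [(lt_div_iff₀ (by positivity)).mpr hq]
  have hN1 : 1 ≤ N := by
    exact_mod_cast (show (1 : ℝ) ≤ N by linarith)
  refine (hgap p q N hN1).not_gt ?_
  calc t * ‖u q - (2 * N : ℝ) • u p‖ + N * C
      ≤ t * (‖u q‖ * dist (normalize (u q)) (normalize (u p)) + 2 * ‖u p‖) + N * C := by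
        gcongr
        exact norm_sub_two_mul_floor_smul_le (norm_pos_iff.mp hp) (u q)
    _ < N * ‖u p‖ := mul_add_mul_lt_mul ht hp hdist hpC.le (norm_nonneg _) hNt
        ((div_lt_iff₀ (by positivity)).mp hlt).le

end GapPrinciple

section Heights

open Filter Real

lemma norm_le_sum_of_sum_nonneg {ι : Type*} [Fintype ι] {ℓ μ : ι → ℝ} (hℓ : 0 ≤ ∑ v, ℓ v)
    (hμ : ∀ v, 0 ≤ μ v) (hℓμ : ∀ v, ℓ v ≤ μ v) : ‖ℓ‖ ≤ ∑ v, μ v := by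
  refine (pi_norm_le_iff_of_nonneg (Finset.sum_nonneg fun v _ ↦ hμ v)).mpr fun v ↦ ?_
  refine abs_le.mpr ⟨?_, ?_⟩
  · have hle := Finset.single_le_sum (f := μ - ℓ) (fun v _ ↦ sub_nonneg.mpr (hℓμ v))
      (Finset.mem_univ v)
    simp only [Pi.sub_apply, Finset.sum_sub_distrib] at hle
    linarith [hμ v]
  · exact (hℓμ v).trans (Finset.single_le_sum (fun v _ ↦ hμ v) (Finset.mem_univ v))

variable {F : Type*} [Field F]

lemma mul_log_affineSup_add_log_padeForm_le (g : AbsoluteValue F ℝ) {N r : ℕ} (hN : 1 ≤ N)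
    (hNr : N ≤ r) (hrN : r ≤ N + 1) {x y a b : F} (hxy : x + y = 1)
    (hab : a * x ^ (2 * N) + b * y ^ (2 * N) = 1) (hD : padeForm N r x a b ≠ 0) :
    N * log (affineSup g x y) + log (g (padeForm N r x a b)) ≤
      N * log 512 + log (affineSup g a b) := by
  have hxy0 : affineSup g x y ≠ 0 := (affineSup_pos x y).ne'
  have hab0 : affineSup g a b ≠ 0 := (affineSup_pos a b).ne'
  have hle := log_le_log (mul_pos (pow_pos (affineSup_pos x y) N) (g.pos hD))
    (affineSup_pow_mul_apply_padeForm_le hN hNr hrN hxy hab)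
  rwa [log_mul (pow_ne_zero N hxy0) (g.ne_zero hD), log_mul (by positivity) hab0, log_pow,
    log_pow] at hle

variable {ι : Type*} (f : ι → AbsoluteValue F ℝ) (w : ι → ℝ)

/-- The logarithmic embedding of the units of `F` given by the absolute values `f v` with weights
`w v`. -/
noncomputable def weightedLog (x : Fˣ) : ι → ℝ :=
  fun v ↦ w v * log (f v x)

/-- The logarithmic embedding applied to both entries of a pair of units. -/
noncomputable def pairLog (p : Fˣ × Fˣ) : (ι → ℝ) × (ι → ℝ) :=
  (weightedLog f w p.1, weightedLog f w p.2)

/-- The logarithmic height of the projective point `(x : y : 1)`, computed from the absolute values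
`f v` with weights `w v`. -/
noncomputable def affineHeight [Fintype ι] (x y : F) : ℝ :=
  ∑ v, w v * log (affineSup (f v) x y)

variable {f w}

lemma weightedLog_div_pow (x y : Fˣ) (n : ℕ) :
    weightedLog f w (y / x ^ n) = weightedLog f w y - (n : ℝ) • weightedLog f w x := by
  ext v
  have hx : f v x ≠ 0 := (f v).ne_zero x.ne_zero
  have hy : f v y ≠ 0 := (f v).ne_zero y.ne_zero
  simp only [weightedLog, Units.val_div_eq_div_val, Units.val_pow_eq_pow_val, map_div₀, map_pow,
    log_div hy (pow_ne_zero n hx), log_pow, Pi.sub_apply, Pi.smul_apply, smul_eq_mul]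
  ring

lemma pairLog_div_pow (p q : Fˣ × Fˣ) (n : ℕ) :
    pairLog f w (q / p ^ n) = pairLog f w q - (n : ℝ) • pairLog f w p :=
  Prod.ext (weightedLog_div_pow p.1 q.1 n) (weightedLog_div_pow p.2 q.2 n)

variable [Fintype ι]

lemma mul_log_fst_le_norm_pairLog (p : Fˣ × Fˣ) (v : ι) :
    w v * log (f v p.1) ≤ ‖pairLog f w p‖ :=
  (le_abs_self _).trans ((norm_le_pi_norm (pairLog f w p).1 v).trans (norm_fst_le _))

lemma mul_log_snd_le_norm_pairLog (p : Fˣ × Fˣ) (v : ι) :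
    w v * log (f v p.2) ≤ ‖pairLog f w p‖ :=
  (le_abs_self _).trans ((norm_le_pi_norm (pairLog f w p).2 v).trans (norm_snd_le _))

lemma affineHeight_le_card_mul_norm_pairLog (p : Fˣ × Fˣ) :
    affineHeight f w p.1 p.2 ≤ Fintype.card ι * ‖pairLog f w p‖ := by
  refine (Finset.sum_le_card_nsmul _ _ ‖pairLog f w p‖ fun v _ ↦ ?_).trans_eq (nsmul_eq_mul _ _)
  obtain h | h := max_choice (max (f v p.1) (f v p.2)) 1
  · obtain h' | h' := max_choice (f v p.1) (f v p.2)
    · rw [affineSup, h, h']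
      exact mul_log_fst_le_norm_pairLog p v
    · rw [affineSup, h, h']
      exact mul_log_snd_le_norm_pairLog p v
  · rw [affineSup, h, log_one, mul_zero]
    exact norm_nonneg _

lemma norm_pairLog_le_affineHeight (hw : ∀ v, 0 ≤ w v) {p : Fˣ × Fˣ}
    (h₁ : 0 ≤ ∑ v, w v * log (f v p.1)) (h₂ : 0 ≤ ∑ v, w v * log (f v p.2)) :
    ‖pairLog f w p‖ ≤ affineHeight f w p.1 p.2 := by
  have hnonneg (v : ι) : 0 ≤ w v * log (affineSup (f v) (p.1 : F) p.2) :=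
    mul_nonneg (hw v) (log_nonneg (one_le_affineSup _ _))
  refine (Prod.norm_def _).trans_le (max_le ?_ ?_)
  · exact norm_le_sum_of_sum_nonneg h₁ hnonneg fun v ↦ mul_le_mul_of_nonneg_left
      (log_le_log ((f v).pos p.1.ne_zero) (le_affineSup_left _ _)) (hw v)
  · exact norm_le_sum_of_sum_nonneg h₂ hnonneg fun v ↦ mul_le_mul_of_nonneg_left
      (log_le_log ((f v).pos p.2.ne_zero) (le_affineSup_right _ _)) (hw v)

variable {O : Subring F}

theorem mul_affineHeight_le [CharZero F] (hw : ∀ v, 0 ≤ w v)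
    (hprod : ∀ z ∈ O, z ≠ 0 → 0 ≤ ∑ v, w v * log (f v z)) {N : ℕ} (hN : 1 ≤ N) {x y a b : F}
    (hx : x ∈ O) (ha : a ∈ O) (hb : b ∈ O) (ha0 : a ≠ 0) (hxy : x + y = 1)
    (hab : a * x ^ (2 * N) + b * y ^ (2 * N) = 1) :
    N * affineHeight f w x y ≤ affineHeight f w a b + N * ∑ v, w v * log 512 := by
  obtain ⟨r, hNr, hrN, hD⟩ := exists_padeForm_ne_zero hN ha0 x b
  have hD0 := hprod _ (padeForm_mem hx ha hb N r) hD
  have hlocal : ∑ v, w v * (N * log (affineSup (f v) x y) + log (f v (padeForm N r x a b))) ≤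
      ∑ v, w v * (N * log 512 + log (affineSup (f v) a b)) :=
    Finset.sum_le_sum fun v _ ↦ mul_le_mul_of_nonneg_left
      (mul_log_affineSup_add_log_padeForm_le (f v) hN hNr hrN hxy hab hD) (hw v)
  simp only [mul_add, mul_left_comm (w _) (N : ℝ), Finset.sum_add_distrib, ← Finset.mul_sum]
    at hlocal
  rw [affineHeight, affineHeight]
  linarith

variable {U : Subgroup Fˣ}

lemma tendsto_norm_pairLog
    (hfin : ∀ R : ℝ, {x : Fˣ | x ∈ U ∧ ∀ v, w v * log (f v x) ≤ R}.Finite)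
    {s : Set (Fˣ × Fˣ)} (hs : s ⊆ U.prod U) :
    Tendsto (fun p : s ↦ ‖pairLog f w p‖) cofinite atTop := by
  refine tendsto_atTop.mpr fun R ↦ eventually_cofinite.mpr ?_
  refine (((hfin R).prod (hfin R)).preimage Subtype.val_injective.injOn).subset fun p hp ↦ ?_
  have hR : ‖pairLog f w p‖ ≤ R := (not_le.mp hp).le
  exact ⟨⟨(hs p.2).1, fun v ↦ (mul_log_fst_le_norm_pairLog p.1 v).trans hR⟩,
    (hs p.2).2, fun v ↦ (mul_log_snd_le_norm_pairLog p.1 v).trans hR⟩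

theorem finite_setOf_unit_add_eq_one [CharZero F] (hUO : ∀ u ∈ U, (u : F) ∈ O)
    (hw : ∀ v, 0 ≤ w v) (hprod : ∀ z ∈ O, z ≠ 0 → 0 ≤ ∑ v, w v * log (f v z))
    (hfin : ∀ R : ℝ, {x : Fˣ | x ∈ U ∧ ∀ v, w v * log (f v x) ≤ R}.Finite) :
    {p : Fˣ × Fˣ | p.1 ∈ U ∧ p.2 ∈ U ∧ (p.1 : F) + p.2 = 1}.Finite := by
  have hsum {u : Fˣ} (hu : u ∈ U) : 0 ≤ ∑ v, w v * log (f v u) := hprod u (hUO u hu) u.ne_zero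
  refine finite_of_gap_principle (C := ∑ v, w v * log 512) (Nat.cast_nonneg (Fintype.card ι))
    (tendsto_norm_pairLog hfin fun p hp ↦ ⟨hp.1, hp.2.1⟩) ?_
  rintro ⟨p, hp₁, hp₂, hp⟩ ⟨q, hq₁, hq₂, hq⟩ N hN
  set c := q / p ^ (2 * N)
  have hc : (c.1 : F) * (p.1 : F) ^ (2 * N) + c.2 * (p.2 : F) ^ (2 * N) = 1 := by
    have hcp : c * p ^ (2 * N) = q := div_mul_cancel q (p ^ (2 * N))
    rw [← hq, ← hcp]
    simp
  calc N * ‖pairLog f w p‖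
      ≤ N * affineHeight f w p.1 p.2 := by
        gcongr
        exact norm_pairLog_le_affineHeight hw (hsum hp₁) (hsum hp₂)
    _ ≤ affineHeight f w c.1 c.2 + N * ∑ v, w v * log 512 :=
        mul_affineHeight_le hw hprod hN (hUO _ hp₁) (hUO _ (div_mem hq₁ (pow_mem hp₁ _)))
          (hUO _ (div_mem hq₂ (pow_mem hp₂ _))) c.1.ne_zero hp hc
    _ ≤ Fintype.card ι * ‖pairLog f w q - (2 * N : ℝ) • pairLog f w p‖ +
          N * ∑ v, w v * log 512 := by
        have hlog := pairLog_div_pow (f := f) (w := w) p q (2 * N)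
        push_cast at hlog
        rw [← hlog]
        gcongr
        exact affineHeight_le_card_mul_norm_pairLog c

end Heights

section NumberFieldPlaces

open Real

lemma finprod_le_prod_of_le_one {α R : Type*} [CommSemiring R] [PartialOrder R] [IsOrderedRing R]
    {g : α → R} {P : Finset α} (hfin : g.HasFiniteMulSupport) (hg : ∀ a, 0 ≤ g a)
    (hP : ∀ a ∉ P, g a ≤ 1) : ∏ᶠ a, g a ≤ ∏ a ∈ P, g a := by
  classical
  have hsub : g.mulSupport ⊆ ↑(hfin.toFinset ∪ P) := fun a ha ↦
    Finset.mem_coe.mpr (Finset.mem_union_left P (hfin.mem_toFinset.mpr ha))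
  rw [finprod_eq_prod_of_mulSupport_subset _ hsub, ← Finset.prod_sdiff Finset.subset_union_right]
  refine mul_le_of_le_one_left (Finset.prod_nonneg fun a _ ↦ hg a) ?_
  exact Finset.prod_le_one (fun a _ ↦ hg a) fun a ha ↦ hP a (Finset.mem_sdiff.mp ha).2

variable {K : Type*} [Field K] [NumberField K]

lemma finitePlace_apply_le_one_iff (v : FinitePlace K) (x : K) :
    v x ≤ 1 ↔ v.maximalIdeal.valuation K x ≤ 1 := by
  rw [← v.norm_embedding_eq, FinitePlace.norm_embedding, HeightOneSpectrum.adicAbv_def,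
    ← WithZeroMulInt.toNNReal_le_one_iff (HeightOneSpectrum.one_lt_absNorm_nnreal v.maximalIdeal)]
  exact NNReal.coe_le_one

variable (P : Finset (FinitePlace K))

/-- The absolute values at the infinite places and at the finite places in `P`. -/
def placeAbs : InfinitePlace K ⊕ P → AbsoluteValue K ℝ :=
  Sum.elim (fun v ↦ v.val) (fun v ↦ v.val.val)

/-- The exponents of the absolute values `placeAbs P` in the product formula. -/
noncomputable def placeWeight : InfinitePlace K ⊕ P → ℝ :=
  Sum.elim (fun v ↦ v.mult) (fun _ ↦ 1)

lemma placeWeight_nonneg (v : InfinitePlace K ⊕ P) : 0 ≤ placeWeight P v := by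
  obtain v | _ := v
  · exact Nat.cast_nonneg _
  · exact zero_le_one

lemma sum_placeWeight_mul_placeAbs (φ : ℝ → ℝ) (x : K) :
    ∑ v, placeWeight P v * φ (placeAbs P v x) =
      ∑ v : InfinitePlace K, v.mult * φ (v x) + ∑ v ∈ P, φ (v x) := by
  rw [Fintype.sum_sum_type, ← Finset.sum_coe_sort P]
  simp only [placeWeight, placeAbs, Sum.elim_inl, Sum.elim_inr, one_mul]
  rfl

variable {P} {x : K}

lemma sum_placeWeight_mul_log_nonneg (hx : x ≠ 0) (hP : ∀ v ∉ P, v x ≤ 1) :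
    0 ≤ ∑ v, placeWeight P v * log (placeAbs P v x) := by
  have hinf (v : InfinitePlace K) : v x ^ v.mult ≠ 0 := pow_ne_zero _ (v.1.ne_zero hx)
  have hfin (v : FinitePlace K) : v x ≠ 0 := v.1.ne_zero hx
  have hprod : 1 ≤ (∏ v : InfinitePlace K, v x ^ v.mult) * ∏ v ∈ P, v x := by
    rw [← prod_abs_eq_one hx]
    gcongr
    exact finprod_le_prod_of_le_one (FinitePlace.hasFiniteMulSupport hx)
      (fun v ↦ apply_nonneg v x) hP
  have hlog := log_nonneg hprod
  rw [log_mul (Finset.prod_ne_zero_iff.mpr fun v _ ↦ hinf v)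
    (Finset.prod_ne_zero_iff.mpr fun v _ ↦ hfin v), log_prod fun v _ ↦ hinf v,
    log_prod fun v _ ↦ hfin v] at hlog
  simpa only [sum_placeWeight_mul_placeAbs, log_pow] using hlog

lemma logHeight₁_eq_sum_placeWeight_mul_posLog (hP : ∀ v ∉ P, v x ≤ 1) :
    Height.logHeight₁ x = ∑ v, placeWeight P v * log⁺ (placeAbs P v x) := by
  rw [logHeight₁_eq, sum_placeWeight_mul_placeAbs, finsum_eq_sum_of_support_subset]
  intro v hv
  by_contra hvP
  refine hv ((posLog_eq_zero_iff _).mpr ?_)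
  rw [abs_of_nonneg (apply_nonneg v x)]
  exact hP v hvP

lemma finite_setOf_placeWeight_mul_log_le (R : ℝ) :
    {x : Kˣ | (∀ v ∉ P, v (x : K) ≤ 1) ∧
      ∀ v, placeWeight P v * log (placeAbs P v x) ≤ R}.Finite := by
  refine ((finite_setOfPred_logHeight₁_le K
    (Fintype.card (InfinitePlace K ⊕ P) * max 0 R)).preimage Units.val_injective.injOn).subset ?_
  rintro x ⟨hP, hR⟩
  change Height.logHeight₁ (x : K) ≤ _
  rw [logHeight₁_eq_sum_placeWeight_mul_posLog hP]
  refine (Finset.sum_le_card_nsmul _ _ (max 0 R) fun v _ ↦ ?_).trans_eq (nsmul_eq_mul _ _)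
  rw [posLog_apply, mul_max_of_nonneg _ _ (placeWeight_nonneg P v), mul_zero]
  exact max_le_max le_rfl (hR v)

end NumberFieldPlaces

/-- The `S`-unit equation: for a number field `K` and a finite set `S` of maximal ideals of
its ring of integers, the equation `x + y = 1` has only finitely many solutions in `S`-units. -/
theorem s_unit_equation (K : Type*) [Field K] [NumberField K]
    (S : Set (HeightOneSpectrum (𝓞 K))) (hS : S.Finite) :
    {p : Kˣ × Kˣ | p.1 ∈ S.unit K ∧ p.2 ∈ S.unit K ∧ (p.1 : K) + (p.2 : K) = 1}.Finite := by
  set P : Finset (FinitePlace K) :=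
    (hS.preimage FinitePlace.maximalIdeal_injective.injOn).toFinset with hPdef
  have hP {z : K} (hz : z ∈ (S.integer K).toSubring) : ∀ v ∉ P, v z ≤ 1 := fun v hv ↦
    (finitePlace_apply_le_one_iff v z).mpr (hz v.maximalIdeal (by simpa [hPdef] using hv))
  have hunit : ∀ u ∈ S.unit K, (u : K) ∈ (S.integer K).toSubring := fun u hu v hv ↦ (hu v hv).le
  exact finite_setOf_unit_add_eq_one hunit (placeWeight_nonneg P)
    (fun z hz hz0 ↦ sum_placeWeight_mul_log_nonneg hz0 (hP hz)) fun R ↦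
      (finite_setOf_placeWeight_mul_log_le R).subset fun u hu ↦ ⟨hP (hunit u hu.1), hu.2⟩
end
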